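/- For fixed integers s ≥ 2 and k ≥ 2 with k not a perfect s-th power, and for every ε > 0, there exists K_ε > 0 such that for all convergents p_n/q_n of the s-th root of k with d_n = k·q_n^s − p_n^s ≠ 0: max(p_n^s, k·q_n^s) < K_ε · (|d_n| · p_n · q_n · k)^{1+ε}. -/

import Mathlib

/-!
Write `α` for the real root of `k`, `d = k q ^ s - p ^ s` and `M = max (α q) p`. As `|d|` is at
least `|α q - p| M ^ (s - 1)`, the claim is a lower bound for `|α q - p| p q`. This is trivial
unless `p / q` is close to `α`, and then it is Roth's theorem: `|α - p / q| ≫ q ^ (-2 - δ)`.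

For Roth's theorem, suppose `α` had approximations `β 1, …, β m` of quality `τ > 2`, with rapidly
increasing denominators. As few monomials have a degree distribution far from the average (a
Chernoff bound), Siegel's lemma yields an integer polynomial `P` of multidegree `r` with small
coefficients and of index nearly `m / 2` at `(α, …, α)`. Choosing `r` such that all
`(den (β i)) ^ r i` have about the same size, a low-order derivative of `P` at `β` is, by Taylor
expansion at `(α, …, α)`, smaller than the inverse of its denominator, hence zero. Thus `P` has
positive index at `β`. This contradicts Roth's lemma, which is proved by induction on the number of
variables: a generalized Wronskian of `P` factors into a polynomial in the first variable and one in
the remaining variables, and the index of a Wronskian at `β` is large when that of `P` is.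
-/

namespace Roth

open MvPolynomial

section HasseDeriv

variable {σ R : Type*} [Fintype σ] [CommRing R]

/-- The multivariate Hasse derivative `(1 / I!) ∂^I`, normalised so that it is defined over every
commutative ring. -/
noncomputable def hasseDeriv (I : σ →₀ ℕ) : MvPolynomial σ R →ₗ[R] MvPolynomial σ R :=
  (basisMonomials σ R).constr R fun K ↦ monomial (K - I) ((∏ i, (K i).choose (I i) : ℕ) : R)

lemma hasseDeriv_monomial (I K : σ →₀ ℕ) (c : R) :
    hasseDeriv I (monomial K c) = monomial (K - I) (c * ((∏ i, (K i).choose (I i) : ℕ) : R)) := by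
  have h : monomial K c = c • basisMonomials σ R K := by
    rw [coe_basisMonomials, smul_monomial, smul_eq_mul, mul_one]
  rw [h, map_smul, hasseDeriv, Module.Basis.constr_basis, smul_monomial, smul_eq_mul]

lemma coeff_hasseDeriv (I J : σ →₀ ℕ) (P : MvPolynomial σ R) :
    coeff J (hasseDeriv I P) = coeff (J + I) P * ((∏ i, ((J + I) i).choose (I i) : ℕ) : R) := by
  classical
  induction P using MvPolynomial.induction_on' with
  | add P Q hP hQ => rw [map_add, coeff_add, coeff_add, hP, hQ, add_mul]
  | monomial K c =>
    rw [hasseDeriv_monomial, coeff_monomial, coeff_monomial]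
    by_cases hIK : I ≤ K
    · simp only [tsub_eq_iff_eq_add_of_le hIK, ite_mul, zero_mul]
      split_ifs with h
      · rw [h]
      · rfl
    · have hK : K ≠ J + I := fun h ↦ hIK (h ▸ le_add_self)
      obtain ⟨i, hi⟩ : ∃ i, K i < I i := by simpa [Finsupp.le_def] using hIK
      rw [Finset.prod_eq_zero (Finset.mem_univ i) (Nat.choose_eq_zero_of_lt hi)]
      simp [hK]

@[simp]
lemma hasseDeriv_zero (P : MvPolynomial σ R) : hasseDeriv 0 P = P := by
  ext J
  simp [coeff_hasseDeriv]

lemma hasseDeriv_map {S : Type*} [CommRing S] (f : R →+* S) (I : σ →₀ ℕ) (P : MvPolynomial σ R) :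
    hasseDeriv I (map f P) = map f (hasseDeriv I P) := by
  ext J
  simp only [coeff_hasseDeriv, coeff_map, map_mul, map_natCast]

lemma hasseDeriv_hasseDeriv (I J : σ →₀ ℕ) (P : MvPolynomial σ R) :
    hasseDeriv I (hasseDeriv J P) =
      (∏ i, (I i + J i).choose (I i)) • hasseDeriv (I + J) P := by
  ext K
  have h : (∏ i, (K i + (I i + J i)).choose (J i)) * ∏ i, (K i + I i).choose (I i) =
      (∏ i, (I i + J i).choose (I i)) * ∏ i, (K i + (I i + J i)).choose (I i + J i) := by
    rw [← Finset.prod_mul_distrib, ← Finset.prod_mul_distrib]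
    refine Finset.prod_congr rfl fun i _ ↦ ?_
    have hsub : K i + (I i + J i) - J i = K i + I i := by lia
    rw [Nat.choose_symm_add (a := I i) (b := J i), mul_comm (Nat.choose _ _),
      mul_comm (Nat.choose (I i + J i) _), Nat.choose_mul (Nat.le_add_left _ _), hsub,
      Nat.add_sub_cancel, mul_comm]
  rw [coeff_hasseDeriv, coeff_hasseDeriv, coeff_smul, coeff_hasseDeriv, mul_assoc,
    nsmul_eq_mul, ← Nat.cast_mul, mul_left_comm (Nat.cast _), ← Nat.cast_mul,
    add_assoc K]
  exact congrArg (fun c : ℕ ↦ coeff (K + (I + J)) P * c) h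

lemma hasseDeriv_single_one (i : σ) (P : MvPolynomial σ R) :
    hasseDeriv (Finsupp.single i 1) P = pderiv i P := by
  classical
  ext J
  rw [coeff_hasseDeriv, coeff_pderiv, Fintype.prod_eq_single i]
  · simp
  · intro j hj
    simp [Finsupp.single_eq_of_ne hj]

lemma degreeOf_hasseDeriv_le (i : σ) (I : σ →₀ ℕ) (P : MvPolynomial σ R) :
    degreeOf i (hasseDeriv I P) ≤ degreeOf i P := by
  refine degreeOf_le_iff.mpr fun J hJ ↦ ?_
  rw [mem_support_iff, coeff_hasseDeriv] at hJ
  have h := monomial_le_degreeOf i (mem_support_iff.mpr (left_ne_zero_of_mul hJ))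
  exact (Nat.le_add_right _ _).trans h

lemma hasseDeriv_eq_zero_of_degreeOf_lt {i : σ} {I : σ →₀ ℕ} {P : MvPolynomial σ R}
    (h : degreeOf i P < I i) : hasseDeriv I P = 0 := by
  ext J
  rw [coeff_hasseDeriv, coeff_zero]
  suffices coeff (J + I) P = 0 by rw [this, zero_mul]
  by_contra hJ
  have := monomial_le_degreeOf i (mem_support_iff.mpr hJ)
  simp only [Finsupp.add_apply] at this
  lia

end HasseDeriv

section Translate

variable {σ R A : Type*} [CommRing R] [CommRing A] [Algebra R A]

/-- The algebra map `P(X) ↦ P(X + a)`; the coefficients of `translate a P` are the Hasse derivatives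
of `P` at `a`. -/
noncomputable def translate (a : σ → A) : MvPolynomial σ R →ₐ[R] MvPolynomial σ A :=
  aeval fun i ↦ X i + C (a i)

lemma aeval_translate (a b : σ → A) (P : MvPolynomial σ R) :
    aeval b (translate a P) = aeval (b + a) P := by
  have h : ((aeval b).restrictScalars R).comp (translate a) = aeval (R := R) (b + a) := by
    ext i
    simp [translate]
  exact DFunLike.congr_fun h P

variable [Fintype σ]

lemma coeff_prod_aeval_X (g : σ → Polynomial R) (J : σ →₀ ℕ) :
    coeff J (∏ i, Polynomial.aeval (X i : MvPolynomial σ R) (g i)) = ∏ i, (g i).coeff (J i) := by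
  classical
  have hX (i : σ) : Polynomial.aeval (X i : MvPolynomial σ R) (g i) =
      ∑ e ∈ (g i).support, C ((g i).coeff e) * X i ^ e := by
    simp [Polynomial.aeval_def, Polynomial.eval₂_eq_sum, Polynomial.sum, algebraMap_eq]
  have hprod (K : σ → ℕ) : ∏ i, (C ((g i).coeff (K i)) * X i ^ K i) =
      monomial (Finsupp.equivFunOnFinite.symm K) (∏ i, (g i).coeff (K i)) := by
    simp [monomial_eq, Finset.prod_mul_distrib, Finsupp.prod_fintype]
  simp only [hX, Finset.prod_univ_sum, hprod, coeff_sum, coeff_monomial, Equiv.symm_apply_eq]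
  rw [Finset.sum_ite_eq']
  refine ite_eq_left_iff.mpr fun hJ ↦ ?_
  obtain ⟨i, hi⟩ : ∃ i, (g i).coeff (J i) = 0 := by simpa using hJ
  exact (Finset.prod_eq_zero (Finset.mem_univ i) hi).symm

lemma coeff_translate (a : σ → A) (J : σ →₀ ℕ) (P : MvPolynomial σ R) :
    coeff J (translate a P) = aeval a (hasseDeriv J P) := by
  induction P using MvPolynomial.induction_on' with
  | add P Q hP hQ => rw [map_add, coeff_add, hP, hQ, map_add, map_add]
  | monomial K c =>
    have h : translate a (monomial K c) = C (algebraMap R A c) *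
        ∏ i, Polynomial.aeval (X i) ((Polynomial.X + Polynomial.C (a i)) ^ K i) := by
      rw [translate, aeval_monomial, Finsupp.prod_fintype _ _ (by simp)]
      simp [algebraMap_eq, IsScalarTower.algebraMap_apply R A (MvPolynomial σ A)]
    rw [h, coeff_C_mul, coeff_prod_aeval_X, hasseDeriv_monomial, aeval_monomial,
      Finsupp.prod_fintype _ _ (by simp)]
    simp only [Polynomial.coeff_X_add_C_pow, Finset.prod_mul_distrib, Finsupp.tsub_apply, map_mul,
      map_natCast, Nat.cast_prod, map_prod, mul_assoc, mul_comm]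

end Translate

section Box

variable {σ : Type*} [Fintype σ]

open scoped Classical in
/-- The set of exponents bounded by `r`, that is, the monomials of multidegree at most `r`. -/
noncomputable def box (r : σ → ℕ) : Finset (σ →₀ ℕ) :=
  (Finset.Iic r).map Finsupp.equivFunOnFinite.symm.toEmbedding

@[simp]
lemma mem_box {r : σ → ℕ} {J : σ →₀ ℕ} : J ∈ box r ↔ ∀ i, J i ≤ r i := by
  simp [box, Pi.le_def]

lemma support_subset_box_iff {R : Type*} [CommSemiring R] {r : σ → ℕ} {P : MvPolynomial σ R} :
    P.support ⊆ box r ↔ ∀ i, degreeOf i P ≤ r i := by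
  simp only [Finset.subset_iff, mem_box, degreeOf_le_iff]
  exact ⟨fun h i J hJ ↦ h hJ i, fun h J hJ i ↦ h i J hJ⟩

lemma sum_box_prod {R : Type*} [CommSemiring R] (r : σ → ℕ) (f : σ → ℕ → R) :
    ∑ J ∈ box r, ∏ i, f i (J i) = ∏ i, ∑ e ∈ Finset.range (r i + 1), f i e := by
  classical
  rw [Finset.prod_univ_sum]
  refine Finset.sum_equiv Finsupp.equivFunOnFinite (fun J ↦ ?_) fun J _ ↦ rfl
  simp

lemma card_box (r : σ → ℕ) : (box r).card = ∏ i, (r i + 1) := by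
  simpa using sum_box_prod r fun _ _ ↦ (1 : ℕ)

lemma card_box_le (r : σ → ℕ) : (box r).card ≤ 2 ^ ∑ i, r i := by
  rw [card_box, ← Finset.prod_pow_eq_pow_sum]
  exact Finset.prod_le_prod' fun i _ ↦ Nat.lt_two_pow_self

end Box

section Taylor

variable {σ R A : Type*} [Fintype σ] [CommRing R] [CommRing A] [Algebra R A]

theorem aeval_eq_sum_hasseDeriv {r : σ → ℕ} {P : MvPolynomial σ R}
    (hP : ∀ i, degreeOf i P ≤ r i) (a b : σ → A) :
    aeval b P = ∑ K ∈ box r, aeval a (hasseDeriv K P) * ∏ i, (b i - a i) ^ K i := by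
  have hsupp : (translate a P).support ⊆ box r := by
    intro J hJ
    rw [mem_support_iff, coeff_translate] at hJ
    refine mem_box.mpr fun i ↦ (hP i).trans' <| not_lt.mp fun hi ↦ hJ ?_
    rw [hasseDeriv_eq_zero_of_degreeOf_lt hi, map_zero]
  calc aeval b P = aeval (b - a) (translate a P) := by rw [aeval_translate, sub_add_cancel]
    _ = ∑ K ∈ (translate a P).support, coeff K (translate a P) * ∏ i, (b - a) i ^ K i := by
        rw [aeval_eq_eval, eval_eq']
    _ = ∑ K ∈ box r, coeff K (translate a P) * ∏ i, (b - a) i ^ K i :=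
        Finset.sum_subset hsupp fun K _ hK ↦ by rw [notMem_support_iff.mp hK, zero_mul]
    _ = _ := by simp only [coeff_translate, Pi.sub_apply]

end Taylor

section Length

variable {σ R : Type*} [SeminormedCommRing R]

/-- The length (`ℓ¹`-norm of the coefficients) of a polynomial. -/
noncomputable def length (P : MvPolynomial σ R) : ℝ := ∑ K ∈ P.support, ‖coeff K P‖

lemma length_eq_sum {P : MvPolynomial σ R} {s : Finset (σ →₀ ℕ)} (h : P.support ⊆ s) :
    length P = ∑ K ∈ s, ‖coeff K P‖ :=
  Finset.sum_subset h fun K _ hK ↦ by rw [notMem_support_iff.mp hK, norm_zero]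

lemma length_nonneg (P : MvPolynomial σ R) : 0 ≤ length P :=
  Finset.sum_nonneg fun _ _ ↦ norm_nonneg _

lemma norm_coeff_le_length (P : MvPolynomial σ R) (K : σ →₀ ℕ) : ‖coeff K P‖ ≤ length P := by
  classical
  rw [length_eq_sum (Finset.subset_insert K P.support)]
  exact Finset.single_le_sum (f := fun K ↦ ‖coeff K P‖) (fun _ _ ↦ norm_nonneg _)
    (Finset.mem_insert_self _ _)

lemma one_le_length {P : MvPolynomial σ ℤ} (hP : P ≠ 0) : 1 ≤ length P := by
  obtain ⟨K, hK⟩ := ne_zero_iff.mp hP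
  have h : (1 : ℝ) ≤ ‖coeff K P‖ := by
    rw [Int.norm_eq_abs]
    exact_mod_cast Int.one_le_abs hK
  exact h.trans (norm_coeff_le_length P K)

lemma length_add_le (P Q : MvPolynomial σ R) : length (P + Q) ≤ length P + length Q := by
  classical
  rw [length_eq_sum support_add, length_eq_sum (P := P) Finset.subset_union_left,
    length_eq_sum (P := Q) Finset.subset_union_right, ← Finset.sum_add_distrib]
  exact Finset.sum_le_sum fun K _ ↦ by rw [coeff_add]; exact norm_add_le _ _

lemma length_sum_le {ι : Type*} (s : Finset ι) (f : ι → MvPolynomial σ R) :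
    length (∑ i ∈ s, f i) ≤ ∑ i ∈ s, length (f i) :=
  Finset.le_sum_of_subadditive length (by simp [length]) length_add_le s f

lemma length_neg (P : MvPolynomial σ R) : length (-P) = length P := by
  simp [length]

lemma length_monomial_le (K : σ →₀ ℕ) (c : R) : length (monomial K c) ≤ ‖c‖ := by
  classical
  rw [length_eq_sum support_monomial_subset, Finset.sum_singleton, coeff_monomial, if_pos rfl]

lemma length_mul_le (P Q : MvPolynomial σ R) : length (P * Q) ≤ length P * length Q := by
  calc length (P * Q)
      = length (∑ K ∈ P.support, ∑ L ∈ Q.support, monomial (K + L) (coeff K P * coeff L Q)) := rfl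
    _ ≤ ∑ K ∈ P.support, ∑ L ∈ Q.support, ‖coeff K P‖ * ‖coeff L Q‖ := by
        refine (length_sum_le _ _).trans (Finset.sum_le_sum fun K _ ↦ ?_)
        refine (length_sum_le _ _).trans (Finset.sum_le_sum fun L _ ↦ ?_)
        exact (length_monomial_le _ _).trans (norm_mul_le _ _)
    _ = length P * length Q := (Finset.sum_mul_sum ..).symm

lemma length_coeff_finSuccEquiv_le {n : ℕ} (P : MvPolynomial (Fin (n + 1)) R) (e : ℕ) :
    length ((finSuccEquiv R n P).coeff e) ≤ length P := by
  classical
  have hinj : Set.InjOn (Finsupp.cons e) (SetLike.coe ((finSuccEquiv R n P).coeff e).support) :=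
    (Finsupp.cons_right_injective e).injOn
  rw [length]
  simp only [finSuccEquiv_coeff_coeff]
  rw [← Finset.sum_image (f := fun K ↦ ‖coeff K P‖) hinj]
  refine Finset.sum_le_sum_of_subset_of_nonneg ?_ fun _ _ _ ↦ norm_nonneg _
  exact image_support_finSuccEquiv.trans_subset (Finset.filter_subset _ _)

lemma abs_aeval_le [Fintype σ] {r : σ → ℕ} {P : MvPolynomial σ ℤ} (hP : ∀ i, degreeOf i P ≤ r i)
    {x : σ → ℝ} {A : ℝ} (hA : 1 ≤ A) (hx : ∀ i, |x i| ≤ A) :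
    |aeval x P| ≤ length P * A ^ ∑ i, r i := by
  rw [aeval_def, eval₂_eq', length, Finset.sum_mul]
  refine (Finset.abs_sum_le_sum_abs _ _).trans (Finset.sum_le_sum fun K hK ↦ ?_)
  have hKr := mem_box.mp (support_subset_box_iff.mpr hP hK)
  rw [abs_mul, Finset.abs_prod, ← Finset.prod_pow_eq_pow_sum]
  refine mul_le_mul_of_nonneg_left (Finset.prod_le_prod (fun _ _ ↦ abs_nonneg _) fun i _ ↦ ?_)
    (abs_nonneg _)
  rw [abs_pow]
  exact (pow_le_pow_left₀ (abs_nonneg _) (hx i) _).trans (pow_le_pow_right₀ hA (hKr i))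

variable [NormOneClass R]

lemma length_prod_le {ι : Type*} (s : Finset ι) (f : ι → MvPolynomial σ R) :
    length (∏ i ∈ s, f i) ≤ ∏ i ∈ s, length (f i) := by
  classical
  induction s using Finset.induction_on with
  | empty => simpa using length_monomial_le (0 : σ →₀ ℕ) (1 : R)
  | insert a s ha ih =>
    rw [Finset.prod_insert ha, Finset.prod_insert ha]
    exact (length_mul_le _ _).trans (mul_le_mul_of_nonneg_left ih (length_nonneg _))

lemma length_det_le {ι : Type*} [Fintype ι] [DecidableEq ι]
    {M : Matrix ι ι (MvPolynomial σ R)} {B : ℝ} (h : ∀ i j, length (M i j) ≤ B) :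
    length M.det ≤ (Fintype.card ι).factorial * B ^ Fintype.card ι := by
  have hterm (τ : Equiv.Perm ι) : length (Equiv.Perm.sign τ • ∏ i, M (τ i) i) ≤
      B ^ Fintype.card ι := by
    have hprod : length (∏ i, M (τ i) i) ≤ B ^ Fintype.card ι :=
      (length_prod_le _ _).trans <|
        (Finset.prod_le_prod (fun _ _ ↦ length_nonneg _) fun _ _ ↦ h _ _).trans_eq (by simp)
    rcases Int.units_eq_one_or (Equiv.Perm.sign τ) with hτ | hτ <;> rw [hτ]
    · simpa using hprod
    · simpa [length_neg] using hprod
  rw [Matrix.det_apply]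
  refine (length_sum_le _ _).trans ((Finset.sum_le_sum fun τ _ ↦ hterm τ).trans_eq ?_)
  simp [Fintype.card_perm]

lemma length_hasseDeriv_le [Fintype σ] {r : σ → ℕ} {P : MvPolynomial σ R}
    (hP : ∀ i, degreeOf i P ≤ r i) (I : σ →₀ ℕ) :
    length (hasseDeriv I P) ≤ 2 ^ (∑ i, r i) * length P := by
  have hchoose {K : σ →₀ ℕ} (hK : K ∈ P.support) :
      ‖((∏ i, (K i).choose (I i) : ℕ) : R)‖ ≤ 2 ^ ∑ i, r i := by
    refine (Nat.norm_cast_le _).trans ?_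
    rw [← Finset.prod_pow_eq_pow_sum, norm_one, mul_one]
    have hKr := mem_box.mp (support_subset_box_iff.mpr hP hK)
    exact_mod_cast Finset.prod_le_prod' fun i _ ↦
      (Nat.choose_le_two_pow _ _).trans (Nat.pow_le_pow_right two_pos (hKr i))
  calc length (hasseDeriv I P)
      = length (∑ K ∈ P.support, hasseDeriv I (monomial K (coeff K P))) := by
        rw [← map_sum, ← P.as_sum]
    _ ≤ ∑ K ∈ P.support, 2 ^ (∑ i, r i) * ‖coeff K P‖ := by
        refine (length_sum_le _ _).trans (Finset.sum_le_sum fun K hK ↦ ?_)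
        rw [hasseDeriv_monomial]
        refine (length_monomial_le _ _).trans ((norm_mul_le _ _).trans ?_)
        rw [mul_comm]
        exact mul_le_mul_of_nonneg_right (hchoose hK) (norm_nonneg _)
    _ = 2 ^ (∑ i, r i) * length P := (Finset.mul_sum ..).symm

end Length

lemma weight_nonneg {σ : Type*} {w : σ → ℝ} (hw : ∀ i, 0 ≤ w i) (J : σ →₀ ℕ) :
    0 ≤ Finsupp.weight w J := by
  rw [Finsupp.weight_apply]
  exact Finset.sum_nonneg fun i _ ↦ nsmul_nonneg (hw i) _

section Index

variable {σ R A : Type*} [Fintype σ] [CommRing R] [CommRing A] [Algebra R A]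

/-- `IndexGE w a t P` says that the index of `P` at the point `a` with respect to the weights `w` is
at least `t`. In Roth's theorem `w i` is the inverse of the degree `r i` in the `i`-th variable. -/
def IndexGE (w : σ → ℝ) (a : σ → A) (t : ℝ) (P : MvPolynomial σ R) : Prop :=
  ∀ J, Finsupp.weight w J < t → aeval a (hasseDeriv J P) = 0

variable {w : σ → ℝ} {a : σ → A}

lemma indexGE_iff_coeff_translate {t : ℝ} {P : MvPolynomial σ R} :
    IndexGE w a t P ↔ ∀ J, Finsupp.weight w J < t → coeff J (translate a P) = 0 := by
  simp only [IndexGE, coeff_translate]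

lemma IndexGE.mul {s t : ℝ} {P Q : MvPolynomial σ R} (hP : IndexGE w a s P)
    (hQ : IndexGE w a t Q) : IndexGE w a (s + t) (P * Q) := by
  classical
  rw [indexGE_iff_coeff_translate] at *
  intro J hJ
  rw [map_mul, coeff_mul]
  refine Finset.sum_eq_zero fun ⟨K, L⟩ hKL ↦ ?_
  obtain rfl : K + L = J := Finset.HasAntidiagonal.mem_antidiagonal.mp hKL
  rw [map_add] at hJ
  rcases lt_or_ge (Finsupp.weight w K) s with hK | hK
  · rw [hP K hK, zero_mul]
  · rw [hQ L (by linarith), mul_zero]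

lemma IndexGE.prod (hw : ∀ i, 0 ≤ w i) {ι : Type*} {s : Finset ι} {t : ι → ℝ}
    {f : ι → MvPolynomial σ R} (h : ∀ i ∈ s, IndexGE w a (t i) (f i)) :
    IndexGE w a (∑ i ∈ s, t i) (∏ i ∈ s, f i) := by
  classical
  induction s using Finset.induction_on with
  | empty => exact fun J hJ ↦ absurd hJ (weight_nonneg hw J).not_gt
  | insert i s hi ih =>
    rw [Finset.sum_insert hi, Finset.prod_insert hi]
    exact (h i (Finset.mem_insert_self _ _)).mul
      (ih fun j hj ↦ h j (Finset.mem_insert_of_mem hj))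

lemma IndexGE.sum {ι : Type*} {s : Finset ι} {t : ℝ} {f : ι → MvPolynomial σ R}
    (h : ∀ i ∈ s, IndexGE w a t (f i)) : IndexGE w a t (∑ i ∈ s, f i) := by
  intro J hJ
  rw [map_sum, map_sum]
  exact Finset.sum_eq_zero fun i hi ↦ h i hi J hJ

lemma IndexGE.zsmul {t : ℝ} {P : MvPolynomial σ R} (h : IndexGE w a t P) (n : ℤ) :
    IndexGE w a t (n • P) := by
  intro J hJ
  rw [map_zsmul, map_zsmul, h J hJ, smul_zero]

lemma IndexGE.det (hw : ∀ i, 0 ≤ w i) {ι : Type*} [Fintype ι] [DecidableEq ι] {t : ι → ℝ}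
    {M : Matrix ι ι (MvPolynomial σ R)} (h : ∀ i j, IndexGE w a (t j) (M i j)) :
    IndexGE w a (∑ j, t j) M.det := by
  rw [Matrix.det_apply]
  exact IndexGE.sum fun τ _ ↦ (IndexGE.prod hw fun j _ ↦ h (τ j) j).zsmul _

lemma IndexGE.hasseDeriv {t : ℝ} {P : MvPolynomial σ R} (h : IndexGE w a t P) (I : σ →₀ ℕ) :
    IndexGE w a (t - Finsupp.weight w I) (hasseDeriv I P) := by
  intro J hJ
  rw [hasseDeriv_hasseDeriv, map_nsmul, h (J + I), smul_zero]
  rw [map_add]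
  linarith

lemma IndexGE.mono {s t : ℝ} {P : MvPolynomial σ R} (h : IndexGE w a t P) (hst : s ≤ t) :
    IndexGE w a s P :=
  fun J hJ ↦ h J (hJ.trans_le hst)

end Index

section Wronskian

variable {K R ι : Type*} [Field K] [CommRing R] [Algebra K R]

/-- The differential operator given by a word in the derivations `D i`. -/
def wordDeriv (D : ι → Derivation K R R) (w : List ι) (x : R) : R :=
  w.foldr (fun i ↦ D i) x

/-- The (generalised) Wronskian matrix of the functions `f j` for the operators given by the words
`w i`. -/
def wronskianMatrix {l : ℕ} (D : ι → Derivation K R R) (w : Fin l → List ι) (f : Fin l → R) :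
    Matrix (Fin l) (Fin l) R :=
  .of fun i j ↦ wordDeriv D (w i) (f j)

variable {D : ι → Derivation K R R}

lemma mul_deriv_eq_of_wordDeriv_relations [IsDomain R] {l : ℕ} {f c : Fin (l + 1) → R}
    {w : Fin l → List ι} (hw : ∀ i, (w i).length ≤ i)
    (hdet : (wronskianMatrix D w (f ∘ Fin.castSucc)).det ≠ 0)
    (hc : ∀ v : List ι, v.length ≤ l → ∑ j, c j * wordDeriv D v (f j) = 0)
    (i : ι) (j : Fin (l + 1)) : c (Fin.last l) * D i (c j) = c j * D i (c (Fin.last l)) := by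
  have hderiv (v : List ι) (hv : v.length < l) : ∑ j, wordDeriv D v (f j) * D i (c j) = 0 := by
    have h := congrArg (D i) (hc v hv.le)
    simpa only [map_sum, map_zero, Derivation.leibniz, smul_eq_mul, Finset.sum_add_distrib,
      show ∑ j, c j * D i (wordDeriv D v (f j)) = 0 from hc (i :: v) hv, zero_add] using h
  have hker : (fun j : Fin l ↦ c (Fin.last l) * D i (c j.castSucc) -
      c j.castSucc * D i (c (Fin.last l))) = 0 := by
    refine Matrix.eq_zero_of_mulVec_eq_zero hdet (funext fun a ↦ ?_)
    have ha : (w a).length < l := (hw a).trans_lt a.2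
    have h₁ := hc (w a) ha.le
    have h₂ := hderiv (w a) ha
    rw [Fin.sum_univ_castSucc] at h₁ h₂
    simp only [wronskianMatrix, Matrix.mulVec, dotProduct, Matrix.of_apply, Function.comp_apply,
      Pi.zero_apply]
    calc _ = c (Fin.last l) * ∑ j : Fin l, wordDeriv D (w a) (f j.castSucc) * D i (c j.castSucc) -
          D i (c (Fin.last l)) * ∑ j : Fin l, c j.castSucc * wordDeriv D (w a) (f j.castSucc) := by
          rw [Finset.mul_sum, Finset.mul_sum, ← Finset.sum_sub_distrib]
          exact Finset.sum_congr rfl fun j _ ↦ by ring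
      _ = 0 := by linear_combination c (Fin.last l) * h₂ - D i (c (Fin.last l)) * h₁
  refine Fin.lastCases rfl (fun j ↦ ?_) j
  exact sub_eq_zero.mp (congrFun hker j)

lemma exists_relations_of_wronskian_eq_zero {l : ℕ} {f : Fin (l + 1) → R} {w : Fin l → List ι}
    (h : ∀ v : List ι, v.length ≤ l → (wronskianMatrix D (Fin.snoc w v) f).det = 0) :
    ∃ c : Fin (l + 1) → R,
      c (Fin.last l) = (wronskianMatrix D w (f ∘ Fin.castSucc)).det ∧
      ∀ v : List ι, v.length ≤ l → ∑ j, c j * wordDeriv D v (f j) = 0 := by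
  refine ⟨fun j ↦ (-1) ^ (l + j : ℕ) * (wronskianMatrix D w (f ∘ j.succAbove)).det, ?_,
    fun v hv ↦ ?_⟩
  · simp [← two_mul, pow_mul, Fin.succAbove_last]
  · have hv := h v hv
    rw [Matrix.det_succ_row _ (Fin.last l)] at hv
    rw [← hv]
    refine Finset.sum_congr rfl fun j _ ↦ ?_
    have hminor : (wronskianMatrix D (Fin.snoc w v) f).submatrix (Fin.last l).succAbove
        j.succAbove = wronskianMatrix D w (f ∘ j.succAbove) := by
      ext i j'
      simp [wronskianMatrix]
    rw [hminor, mul_right_comm]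
    simp [wronskianMatrix]

variable [IsDomain R]

theorem exists_wronskian_ne_zero
    (hD : ∀ a b : R, a ≠ 0 → (∀ i, a * D i b = b * D i a) → ∃ c : K, b = c • a)
    {l : ℕ} {f : Fin l → R} (hf : LinearIndependent K f) :
    ∃ w : Fin l → List ι, (∀ i, (w i).length ≤ i) ∧ (wronskianMatrix D w f).det ≠ 0 := by
  induction l with
  | zero => exact ⟨Fin.elim0, fun i ↦ i.elim0, by simp⟩
  | succ l ih =>
    obtain ⟨w, hw, hdet⟩ := ih (hf.comp _ (Fin.castSucc_injective l))
    by_contra! hall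
    obtain ⟨c, hlast, hc⟩ := exists_relations_of_wronskian_eq_zero (D := D) (w := w) (f := f)
      fun v hv ↦ hall (Fin.snoc w v) <|
        Fin.lastCases (by simpa using hv) fun i ↦ by simpa using hw i
    rw [← hlast] at hdet
    choose t ht using fun j ↦ hD _ (c j) hdet fun i ↦
      mul_deriv_eq_of_wordDeriv_relations hw (hlast ▸ hdet) hc i j
    have hsum : c (Fin.last l) * ∑ j, t j • f j = 0 := by
      rw [← hc [] (Nat.zero_le l), Finset.mul_sum]
      refine Finset.sum_congr rfl fun j _ ↦ ?_
      rw [ht j]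
      simp [wordDeriv]
    have ht0 := Fintype.linearIndependent_iff.mp hf t ((mul_eq_zero.mp hsum).resolve_left hdet)
    exact hdet (by rw [ht (Fin.last l), ht0, zero_smul])

lemma exists_eq_smul_of_mul_deriv_eq [UniqueFactorizationMonoid R]
    (hD : ∀ P : R, (∀ i, P ∣ D i P) → ∃ c : K, P = algebraMap K R c)
    {a b : R} (ha : a ≠ 0) (h : ∀ i, a * D i b = b * D i a) : ∃ c : K, b = c • a := by
  obtain ⟨a', b', g, hrel, rfl, rfl⟩ := UniqueFactorizationMonoid.exists_reduced_factors a ha b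
  have hg : g ≠ 0 := left_ne_zero_of_mul ha
  have h' (i : ι) : a' * D i b' = b' * D i a' := by
    have := h i
    simp only [Derivation.leibniz, smul_eq_mul] at this
    refine mul_left_cancel₀ (pow_ne_zero 2 hg) ?_
    linear_combination this
  obtain ⟨u, rfl⟩ := hD a' fun i ↦ hrel.dvd_of_dvd_mul_left ⟨_, (h' i).symm⟩
  obtain ⟨v, rfl⟩ := hD b' fun i ↦ hrel.symm.dvd_of_dvd_mul_left ⟨_, h' i⟩
  have hu : u ≠ 0 := fun hu ↦ ha (by simp [hu])
  refine ⟨v / u, ?_⟩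
  rw [Algebra.smul_def, mul_left_comm, ← map_mul, div_mul_cancel₀ v hu]

end Wronskian

section MvPolynomial

variable {σ K : Type*}

lemma degreeOf_pderiv_lt [CommSemiring K] {i : σ} {P : MvPolynomial σ K} (h : pderiv i P ≠ 0) :
    degreeOf i (pderiv i P) < degreeOf i P := by
  classical
  have hshift {J : σ →₀ ℕ} (hJ : J ∈ (pderiv i P).support) : J i < degreeOf i P := by
    rw [mem_support_iff, coeff_pderiv] at hJ
    simpa [Nat.succ_le_iff] using
      monomial_le_degreeOf i (mem_support_iff.mpr (left_ne_zero_of_mul hJ))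
  obtain ⟨J, hJ⟩ := support_nonempty.mpr h
  exact (degreeOf_lt_iff (Nat.zero_lt_of_lt (hshift hJ))).mpr fun J hJ ↦ hshift hJ

lemma exists_wordDeriv_eq_nsmul_hasseDeriv [Fintype σ] [Field K] (w : List σ) :
    ∃ (I : σ →₀ ℕ) (n : ℕ), I.degree = w.length ∧
      ∀ P : MvPolynomial σ K, wordDeriv pderiv w P = n • hasseDeriv I P := by
  induction w with
  | nil => exact ⟨0, 1, by simp, fun P ↦ by simp [wordDeriv]⟩
  | cons i w ih =>
    obtain ⟨I, n, hI, hn⟩ := ih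
    have hcons (P : MvPolynomial σ K) :
        wordDeriv pderiv (i :: w) P = pderiv i (n • hasseDeriv I P) := by rw [← hn]; rfl
    simp only [hcons, map_nsmul, ← hasseDeriv_single_one, hasseDeriv_hasseDeriv, ← mul_smul]
    exact ⟨_, _, by simp [hI, add_comm], fun P ↦ rfl⟩

variable [Field K] [CharZero K]

lemma eq_C_of_forall_dvd_pderiv {P : MvPolynomial σ K} (h : ∀ i, P ∣ pderiv i P) :
    ∃ c, P = C c := by
  classical
  have hzero (i : σ) : pderiv i P = 0 := by
    by_contra hne
    obtain ⟨Q, hQ⟩ := h i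
    have hlt := degreeOf_pderiv_lt hne
    rw [hQ] at hne hlt
    rw [degreeOf_mul_eq (left_ne_zero_of_mul hne) (right_ne_zero_of_mul hne)] at hlt
    lia
  refine ⟨coeff 0 P, MvPolynomial.ext _ _ fun J ↦ ?_⟩
  rw [coeff_C]
  split_ifs with hJ
  · rw [hJ]
  · obtain ⟨i, hi⟩ := Finsupp.ne_iff.mp (Ne.symm hJ)
    have hcoeff := congrArg (coeff (J - Finsupp.single i 1)) (hzero i)
    rw [coeff_pderiv, tsub_add_cancel_of_le (by simpa [Nat.one_le_iff_ne_zero] using hi),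
      coeff_zero] at hcoeff
    exact (mul_eq_zero.mp hcoeff).resolve_right (by norm_cast)

theorem exists_det_hasseDeriv_ne_zero [Fintype σ] {l : ℕ} {f : Fin l → MvPolynomial σ K}
    (hf : LinearIndependent K f) :
    ∃ I : Fin l → (σ →₀ ℕ), (∀ i, (I i).degree ≤ i) ∧
      (Matrix.of fun i j ↦ hasseDeriv (I i) (f j)).det ≠ 0 := by
  obtain ⟨w, hw, hdet⟩ := exists_wronskian_ne_zero (D := pderiv)
    (fun a b ↦ exists_eq_smul_of_mul_deriv_eq fun P ↦ eq_C_of_forall_dvd_pderiv) hf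
  choose I n hI hn using fun i ↦ exists_wordDeriv_eq_nsmul_hasseDeriv (K := K) (w i)
  refine ⟨I, fun i ↦ (hI i).trans_le (hw i),
    right_ne_zero_of_mul (a := ∏ i, (n i : MvPolynomial σ K)) ?_⟩
  rw [← Matrix.det_mul_column]
  simpa [wronskianMatrix, hn] using hdet

end MvPolynomial

section Polynomial

variable {K : Type*} [Field K] [CharZero K]

lemma polynomial_eq_C_of_dvd_derivative {P : Polynomial K} (h : P ∣ Polynomial.derivative P) :
    ∃ c, P = Polynomial.C c :=
  ⟨_, Polynomial.eq_C_of_natDegree_eq_zero <| Polynomial.derivative_eq_zero.mp <|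
    by_contra fun hne ↦ (Polynomial.degree_derivative_lt
      (fun hP ↦ hne (by simp [hP]))).not_ge (Polynomial.degree_le_of_dvd h hne)⟩

theorem exists_det_polynomial_hasseDeriv_ne_zero {l : ℕ} {f : Fin l → Polynomial K}
    (hf : LinearIndependent K f) :
    ∃ a : Fin l → ℕ, (∀ i, a i ≤ i) ∧
      (Matrix.of fun i j ↦ Polynomial.hasseDeriv (a i) (f j)).det ≠ 0 := by
  obtain ⟨w, hw, hdet⟩ := exists_wronskian_ne_zero
    (D := fun _ : Unit ↦ (Polynomial.derivative' : Derivation K (Polynomial K) (Polynomial K)))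
    (fun a b ↦ exists_eq_smul_of_mul_deriv_eq fun P hP ↦
      polynomial_eq_C_of_dvd_derivative (hP ())) hf
  refine ⟨fun i ↦ (w i).length, hw,
    right_ne_zero_of_mul (a := ∏ i, ((w i).length.factorial : Polynomial K)) ?_⟩
  rw [← Matrix.det_mul_column]
  have hword (v : List Unit) (g : Polynomial K) :
      wordDeriv (fun _ : Unit ↦ Polynomial.derivative') v g =
        v.length.factorial * Polynomial.hasseDeriv v.length g := by
    rw [wordDeriv, List.foldr_const, ← nsmul_eq_mul, ← LinearMap.smul_apply,
      Polynomial.factorial_smul_hasseDeriv]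
    rfl
  simpa [wronskianMatrix, hword] using hdet

end Polynomial

section Bilinear

variable {K V W U : Type*} [Field K] [AddCommGroup V] [Module K V] [AddCommGroup W] [Module K W]
  [AddCommGroup U] [Module K U]

lemma exists_shorter_sum_bilin_of_not_linearIndependent (B : V →ₗ[K] W →ₗ[K] U) {l : ℕ}
    {v : Fin (l + 1) → V} (hv : ¬ LinearIndependent K v) (w : Fin (l + 1) → W) :
    ∃ (v' : Fin l → V) (w' : Fin l → W), ∑ b, B (v' b) (w' b) = ∑ b, B (v b) (w b) := by
  obtain ⟨c, hc, i, hi⟩ := Fintype.not_linearIndependent_iff.mp hv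
  have hvi : v i = ∑ j, (-(c i)⁻¹ * c (i.succAbove j)) • v (i.succAbove j) := by
    rw [Fin.sum_univ_succAbove _ i, add_eq_zero_iff_eq_neg, ← eq_inv_smul_iff₀ hi] at hc
    simp only [hc, smul_neg, Finset.smul_sum, mul_smul, neg_smul, Finset.sum_neg_distrib]
  refine ⟨v ∘ i.succAbove, fun j ↦ (-(c i)⁻¹ * c (i.succAbove j)) • w i + w (i.succAbove j), ?_⟩
  rw [Fin.sum_univ_succAbove _ i, congrArg B hvi]
  simp [Finset.sum_add_distrib]

theorem exists_sum_bilin_linearIndependent (B : V →ₗ[K] W →ₗ[K] U) {l : ℕ} (v : Fin l → V)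
    (w : Fin l → W) : ∃ l' ≤ l, ∃ (v' : Fin l' → V) (w' : Fin l' → W), LinearIndependent K v' ∧
      LinearIndependent K w' ∧ ∑ b, B (v' b) (w' b) = ∑ b, B (v b) (w b) := by
  induction l with
  | zero => exact ⟨0, le_rfl, v, w, linearIndependent_empty_type, linearIndependent_empty_type, rfl⟩
  | succ l ih =>
    by_cases hv : LinearIndependent K v
    · by_cases hw : LinearIndependent K w
      · exact ⟨l + 1, le_rfl, v, w, hv, hw, rfl⟩
      · obtain ⟨w', v', h⟩ := exists_shorter_sum_bilin_of_not_linearIndependent B.flip hw v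
        obtain ⟨l', hl', v'', w'', hv'', hw'', h'⟩ := ih v' w'
        exact ⟨l', hl'.trans l.le_succ, v'', w'', hv'', hw'', h'.trans h⟩
    · obtain ⟨v', w', h⟩ := exists_shorter_sum_bilin_of_not_linearIndependent B hv w
      obtain ⟨l', hl', v'', w'', hv'', hw'', h'⟩ := ih v' w'
      exact ⟨l', hl'.trans l.le_succ, v'', w'', hv'', hw'', h'.trans h⟩

end Bilinear

section OuterMul

variable {R : Type*} [CommRing R] {n : ℕ}

/-- The product `g(X₀) f(X₁, …, Xₙ)` of polynomials in disjoint sets of variables. -/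
noncomputable def outerMul :
    Polynomial R →ₗ[R] MvPolynomial (Fin n) R →ₗ[R] MvPolynomial (Fin (n + 1)) R :=
  (LinearMap.mul R _).compl₁₂ (Polynomial.aeval (X 0)).toLinearMap
    (rename Fin.succ : MvPolynomial (Fin n) R →ₐ[R] _).toLinearMap

lemma outerMul_apply (g : Polynomial R) (f : MvPolynomial (Fin n) R) :
    outerMul g f = Polynomial.aeval (X 0) g * rename Fin.succ f := rfl

lemma aeval_outerMul {A : Type*} [CommRing A] [Algebra R A] (x : Fin (n + 1) → A)
    (g : Polynomial R) (f : MvPolynomial (Fin n) R) :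
    aeval x (outerMul g f) = Polynomial.aeval (x 0) g * aeval (Fin.tail x) f := by
  rw [outerMul_apply, map_mul, ← Polynomial.aeval_algHom_apply, aeval_X, aeval_rename]
  rfl

lemma coeff_outerMul (g : Polynomial R) (f : MvPolynomial (Fin n) R) (a : ℕ) (I : Fin n →₀ ℕ) :
    coeff (I.cons a) (outerMul g f) = g.coeff a * coeff I f := by
  have hg : finSuccEquiv R n (Polynomial.aeval (X 0) g) = g.map C := by
    have h : (finSuccEquiv R n).toAlgHom.comp (Polynomial.aeval (X 0)) =
        Polynomial.mapAlgHom (Algebra.ofId R _) := by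
      ext
      simp [finSuccEquiv_X_zero]
    exact DFunLike.congr_fun h g
  have hf : finSuccEquiv R n (rename Fin.succ f) = Polynomial.C f := by
    have h : (finSuccEquiv R n).toAlgHom.comp (rename Fin.succ) = Polynomial.CAlgHom := by
      ext
      simp [finSuccEquiv_X_succ]
    exact DFunLike.congr_fun h f
  rw [← finSuccEquiv_coeff_coeff, outerMul_apply, map_mul, hg, hf, Polynomial.coeff_mul_C,
    Polynomial.coeff_map, coeff_C_mul]

lemma mvPolynomial_ext_cons {P Q : MvPolynomial (Fin (n + 1)) R}
    (h : ∀ a (I : Fin n →₀ ℕ), coeff (I.cons a) P = coeff (I.cons a) Q) : P = Q :=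
  MvPolynomial.ext _ _ fun J ↦ by simpa only [Finsupp.cons_tail] using h (J 0) J.tail

lemma hasseDeriv_cons_outerMul (a : ℕ) (I : Fin n →₀ ℕ) (g : Polynomial R)
    (f : MvPolynomial (Fin n) R) :
    hasseDeriv (I.cons a) (outerMul g f) =
      outerMul (Polynomial.hasseDeriv a g) (hasseDeriv I f) := by
  refine mvPolynomial_ext_cons fun b J ↦ ?_
  have hcons : J.cons b + I.cons a = (J + I).cons (b + a) := by
    ext i
    refine Fin.cases ?_ (fun i ↦ ?_) i <;> simp
  simp only [coeff_hasseDeriv, coeff_outerMul, hcons, Polynomial.hasseDeriv_coeff,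
    Fin.prod_univ_succ, Finsupp.cons_zero, Finsupp.cons_succ]
  push_cast
  ring

lemma eq_sum_outerMul {P : MvPolynomial (Fin (n + 1)) R} {N : ℕ} (h : degreeOf 0 P ≤ N) :
    P = ∑ b : Fin (N + 1), outerMul (Polynomial.X ^ (b : ℕ)) ((finSuccEquiv R n P).coeff b) := by
  refine mvPolynomial_ext_cons fun a I ↦ ?_
  simp only [coeff_sum, coeff_outerMul, Polynomial.coeff_X_pow, ite_mul, one_mul, zero_mul,
    finSuccEquiv_coeff_coeff]
  by_cases ha : a < N + 1
  · rw [Fintype.sum_eq_single ⟨a, ha⟩ (by simp +contextual [Fin.ext_iff, eq_comm])]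
    simp
  · rw [Finset.sum_eq_zero fun b _ ↦ if_neg (by lia)]
    by_contra hne
    have := monomial_le_degreeOf 0 (mem_support_iff.mpr hne)
    rw [Finsupp.cons_zero] at this
    lia

end OuterMul

section Wronskian

variable {K : Type*} [Field K] [CharZero K] {n : ℕ}

theorem exists_det_hasseDeriv_eq_outerMul {P : MvPolynomial (Fin (n + 1)) K} (hP : P ≠ 0) {N : ℕ}
    (hN : degreeOf 0 P ≤ N) :
    ∃ l, 0 < l ∧ l ≤ N + 1 ∧ ∃ (a : Fin l → ℕ) (I : Fin l → (Fin n →₀ ℕ)),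
      (∀ j, a j ≤ j) ∧ (∀ i, (I i).degree ≤ i) ∧
      ∃ (V : Polynomial K) (U : MvPolynomial (Fin n) K), V ≠ 0 ∧ U ≠ 0 ∧
        (Matrix.of fun i j ↦ hasseDeriv ((I i).cons (a j)) P).det = outerMul V U := by
  obtain ⟨l, hl, v, w, hv, hw, hsum⟩ := exists_sum_bilin_linearIndependent outerMul
    (fun b : Fin (N + 1) ↦ Polynomial.X ^ (b : ℕ)) fun b ↦ (finSuccEquiv K n P).coeff b
  rw [← eq_sum_outerMul hN] at hsum
  obtain ⟨a, ha, hV⟩ := exists_det_polynomial_hasseDeriv_ne_zero hv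
  obtain ⟨I, hI, hU⟩ := exists_det_hasseDeriv_ne_zero hw
  have hl0 : 0 < l := by
    refine Nat.pos_of_ne_zero ?_
    rintro rfl
    exact hP (by simpa using hsum.symm)
  refine ⟨l, hl0, hl, a, I, ha, hI, _, _, hV, hU, ?_⟩
  rw [outerMul_apply, mul_comm, AlgHom.map_det, AlgHom.map_det, ← Matrix.det_transpose
    ((Polynomial.aeval (X 0)).mapMatrix _), ← Matrix.det_mul]
  congr 1
  ext1 i j
  simp only [Matrix.mul_apply, AlgHom.mapMatrix_apply, Matrix.map_apply, Matrix.of_apply,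
    Matrix.transpose_apply, ← hsum, map_sum, hasseDeriv_cons_outerMul]
  exact Finset.sum_congr rfl fun b _ ↦ mul_comm _ _

end Wronskian

section Integral

variable {n : ℕ}

theorem exists_C_mul_eq_outerMul {W : MvPolynomial (Fin (n + 1)) ℤ} {V : Polynomial ℚ}
    {U : MvPolynomial (Fin n) ℚ} (hV : V ≠ 0) (hU : U ≠ 0)
    (hW : map (Int.castRingHom ℚ) W = outerMul V U) :
    ∃ c ≠ 0, ∃ (a : ℕ) (I : Fin n →₀ ℕ) (V' : Polynomial ℤ),
      (∀ b, V'.coeff b = coeff (I.cons b) W) ∧ V' ≠ 0 ∧ (finSuccEquiv ℤ n W).coeff a ≠ 0 ∧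
      C c * W = outerMul V' ((finSuccEquiv ℤ n W).coeff a) := by
  have hcoeff (b : ℕ) (J : Fin n →₀ ℕ) :
      ((coeff (J.cons b) W : ℤ) : ℚ) = V.coeff b * coeff J U := by
    rw [← coeff_outerMul, ← hW, coeff_map, eq_intCast]
  obtain ⟨I, hI⟩ := support_nonempty.mpr hU
  obtain ⟨a, ha⟩ := Polynomial.support_nonempty.mpr hV
  rw [mem_support_iff] at hI
  rw [Polynomial.mem_support_iff] at ha
  have hc : coeff (I.cons a) W ≠ 0 := by
    rw [← Int.cast_ne_zero (α := ℚ), hcoeff]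
    exact mul_ne_zero ha hI
  set V' : Polynomial ℤ :=
    ∑ b ∈ Finset.range (V.natDegree + 1), Polynomial.monomial b (coeff (I.cons b) W) with hV'def
  have hV' (b : ℕ) : V'.coeff b = coeff (I.cons b) W := by
    simp only [hV'def, Polynomial.finsetSum_coeff, Polynomial.coeff_monomial, Finset.sum_ite_eq',
      Finset.mem_range, Nat.lt_succ_iff, ite_eq_left_iff, not_le]
    intro hb
    rw [← Int.cast_inj (α := ℚ), hcoeff, Polynomial.coeff_eq_zero_of_natDegree_lt hb]
    simp
  refine ⟨_, hc, a, I, V', hV', ?_, ?_, ?_⟩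
  · intro h
    exact hc (by rw [← hV', h, Polynomial.coeff_zero])
  · intro h
    exact hc (by rw [← finSuccEquiv_coeff_coeff, h, coeff_zero])
  · refine mvPolynomial_ext_cons fun b J ↦ ?_
    rw [coeff_C_mul, coeff_outerMul, hV', finSuccEquiv_coeff_coeff, ← Int.cast_inj (α := ℚ)]
    push_cast
    simp only [hcoeff]
    ring

end Integral

section RationalRoot

theorem den_pow_rootMultiplicity_dvd_leadingCoeff (V : Polynomial ℤ) (β : ℚ) :
    (β.den : ℤ) ^ (V.map (Int.castRingHom ℚ)).rootMultiplicity β ∣ V.leadingCoeff := by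
  set e := (V.map (Int.castRingHom ℚ)).rootMultiplicity β
  set L : Polynomial ℤ := Polynomial.C (β.den : ℤ) * Polynomial.X + Polynomial.C (-β.num)
  have hden : (β.den : ℤ) ≠ 0 := by exact_mod_cast β.den_ne_zero
  have hprim : L.IsPrimitive := by
    intro c hc
    rw [Polynomial.C_dvd_iff_dvd_coeff] at hc
    have h₀ : c ∣ -β.num := by
      simpa only [L, Polynomial.coeff_add, Polynomial.coeff_C_mul, Polynomial.coeff_X_zero,
        Polynomial.coeff_C_zero, mul_zero, zero_add] using hc 0
    have h₁ : c ∣ β.den := by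
      simpa only [L, Polynomial.coeff_add, Polynomial.coeff_C_mul, Polynomial.coeff_X_one,
        Polynomial.coeff_C_succ, mul_one, add_zero] using hc 1
    exact (Rat.isCoprime_num_den β).isUnit_of_dvd' (dvd_neg.mp h₀) h₁
  have hmap : L.map (Int.castRingHom ℚ) =
      Polynomial.C (β.den : ℚ) * (Polynomial.X - Polynomial.C β) := by
    rw [mul_sub, ← Polynomial.C_mul, mul_comm (β.den : ℚ) β, Rat.mul_den_eq_num]
    simp [L, sub_eq_add_neg]
  have hdvd : (L ^ e).map (Int.castRingHom ℚ) ∣ V.map (Int.castRingHom ℚ) := by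
    rw [Polynomial.map_pow, hmap, mul_pow, ← Polynomial.C_pow]
    refine (IsUnit.mul_left_dvd ?_).mpr (Polynomial.pow_rootMultiplicity_dvd _ _)
    exact Polynomial.isUnit_C.mpr (isUnit_iff_ne_zero.mpr (by positivity))
  have hpow (k : ℕ) : (L ^ k).IsPrimitive := by
    induction k with
    | zero => exact pow_zero L ▸ Polynomial.isPrimitive_one
    | succ k ih => exact pow_succ L k ▸ ih.mul hprim
  have h := Polynomial.leadingCoeff_dvd_leadingCoeff <|
    (Polynomial.IsPrimitive.Int.dvd_iff_map_cast_dvd_map_cast _ _ (hpow e)).mpr hdvd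
  rwa [Polynomial.leadingCoeff_pow, Polynomial.leadingCoeff_linear hden] at h

lemma aeval_hasseDeriv_rootMultiplicity_ne_zero {V : Polynomial ℤ} (hV : V ≠ 0) (β : ℚ) :
    Polynomial.aeval β (Polynomial.hasseDeriv
      ((V.map (Int.castRingHom ℚ)).rootMultiplicity β) V) ≠ 0 := by
  set e := (V.map (Int.castRingHom ℚ)).rootMultiplicity β with he
  have hVQ : V.map (Int.castRingHom ℚ) ≠ 0 :=
    (Polynomial.map_ne_zero_iff Int.cast_injective).mpr hV
  have hmap : (Polynomial.hasseDeriv e V).map (Int.castRingHom ℚ) =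
      Polynomial.hasseDeriv e (V.map (Int.castRingHom ℚ)) := by
    ext
    simp [Polynomial.hasseDeriv_coeff]
  rw [Polynomial.aeval_def, algebraMap_int_eq, ← Polynomial.eval_map, hmap,
    ← Polynomial.taylor_coeff, he, Polynomial.rootMultiplicity_eq_natTrailingDegree,
    ← Polynomial.taylor_apply]
  exact Polynomial.trailingCoeff_nonzero_iff_nonzero.mpr
    ((map_ne_zero_iff _ (Polynomial.taylor_injective β)).mpr hVQ)

end RationalRoot

section Bounds

lemma degreeOf_det_le {σ R ι : Type*} [CommRing R] [Fintype ι] [DecidableEq ι]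
    {M : Matrix ι ι (MvPolynomial σ R)} {j : σ} {d : ℕ} (h : ∀ i k, degreeOf j (M i k) ≤ d) :
    degreeOf j M.det ≤ Fintype.card ι * d := by
  rw [Matrix.det_apply]
  refine (degreeOf_sum_le _ _ _).trans (Finset.sup_le fun τ _ ↦ ?_)
  have hprod : degreeOf j (∏ i, M (τ i) i) ≤ Fintype.card ι * d := by
    refine (degreeOf_prod_le _ _ _).trans ?_
    simpa using Finset.sum_le_card_nsmul Finset.univ _ d fun i _ ↦ h (τ i) i
  rcases Int.units_eq_one_or (Equiv.Perm.sign τ) with hτ | hτ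
  · simpa [hτ] using hprod
  · simpa [hτ, degreeOf_neg] using hprod

lemma map_det_hasseDeriv {σ R S ι : Type*} [CommRing R] [CommRing S] [Fintype σ] [Fintype ι]
    [DecidableEq ι] (f : R →+* S) (J : ι → ι → (σ →₀ ℕ)) (P : MvPolynomial σ R) :
    map f (Matrix.of fun i j ↦ hasseDeriv (J i j) P).det =
      (Matrix.of fun i j ↦ hasseDeriv (J i j) (map f P)).det := by
  rw [RingHom.map_det]
  congr 1
  ext1 i j
  simp only [RingHom.mapMatrix_apply, Matrix.map_apply, Matrix.of_apply, hasseDeriv_map]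

lemma factorial_mul_pow_le_exp {l : ℕ} {T B : ℝ} (hl : l ≤ T + 1) (hB₀ : 0 ≤ B)
    (hB : B ≤ Real.exp (2 * T)) : l.factorial * B ^ l ≤ Real.exp (3 * l * T) := by
  have hfac : (l.factorial : ℝ) ≤ Real.exp T ^ l := by
    calc (l.factorial : ℝ) ≤ (l : ℝ) ^ l := by exact_mod_cast l.factorial_le_pow
      _ ≤ _ := by gcongr; exact hl.trans (Real.add_one_le_exp T)
  calc l.factorial * B ^ l ≤ Real.exp T ^ l * Real.exp (2 * T) ^ l := by gcongr
    _ = _ := by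
      rw [← mul_pow, ← Real.exp_add, ← Real.exp_nat_mul]
      ring_nf

lemma mul_sq_div_eight_le_sum_max {l r : ℕ} (hr : 0 < r) (hl : l ≤ r + 1) {x : ℝ} (hx₀ : 0 ≤ x)
    (hx₁ : x ≤ 1) : l * x ^ 2 / 8 ≤ ∑ j : Fin l, max 0 (x - j / r) := by
  set c := min l (⌊x * r / 2⌋₊ + 1)
  have hr₀ : (0 : ℝ) < r := by exact_mod_cast hr
  have hl' : (l : ℝ) ≤ 2 * r := by exact_mod_cast (by lia : l ≤ 2 * r)
  have hc : l * x / 4 ≤ c := by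
    rw [Nat.cast_min]
    refine le_min (by nlinarith [l.cast_nonneg (α := ℝ)]) ?_
    push_cast
    exact le_trans (by nlinarith) (Nat.lt_floor_add_one (x * r / 2)).le
  have hterm {j : ℕ} (hj : j ∈ Finset.range c) : x / 2 ≤ max 0 (x - j / r) := by
    have hjr : (j : ℝ) ≤ x * r / 2 := (Nat.le_floor_iff (by positivity)).mp
      (Nat.lt_succ_iff.mp ((Finset.mem_range.mp hj).trans_le (min_le_right _ _)))
    have : (j : ℝ) / r ≤ x / 2 := by rw [div_le_iff₀ hr₀]; linarith
    exact le_max_of_le_right (by linarith)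
  calc l * x ^ 2 / 8 = l * x / 4 * (x / 2) := by ring
    _ ≤ c * (x / 2) := by gcongr
    _ = ∑ j ∈ Finset.range c, x / 2 := by simp
    _ ≤ ∑ j ∈ Finset.range c, max 0 (x - j / r) := Finset.sum_le_sum fun j ↦ hterm
    _ ≤ ∑ j ∈ Finset.range l, max 0 (x - j / r) :=
        Finset.sum_le_sum_of_subset_of_nonneg (Finset.range_mono (min_le_left _ _))
          fun j _ _ ↦ le_max_left _ _
    _ = _ := (Fin.sum_univ_eq_sum_range (fun j ↦ max 0 (x - (j : ℝ) / r)) l).symm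

lemma weight_cons {n : ℕ} (w : Fin (n + 1) → ℝ) (a : ℕ) (J : Fin n →₀ ℕ) :
    Finsupp.weight w (J.cons a) = a * w 0 + Finsupp.weight (Fin.tail w) J := by
  simp [Finsupp.weight_eq_sum, Fin.sum_univ_succ, Fin.tail]

end Bounds

section RothLemma

/-- The hypotheses of Roth's lemma on an integer polynomial `P` of degree at most `r i` in the
`i`-th variable and a rational point `β`: the degrees increase rapidly (by a factor `1 / σ`), and
the height of `P` is small compared to that of each coordinate of `β`. The common bound `T` for the
degrees and the logarithmic height of `P` is a parameter because it scales in the induction on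
`n`. -/
structure RothHypotheses {n : ℕ} (σ T : ℝ) (r : Fin n → ℕ) (β : Fin n → ℚ)
    (P : MvPolynomial (Fin n) ℤ) : Prop where
  ne_zero : P ≠ 0
  pos : ∀ i, 0 < r i
  degreeOf_le : ∀ i, degreeOf i P ≤ r i
  le_mul : ∀ i j, i < j → (r i : ℝ) ≤ σ * r j
  sum_le : ((∑ i, r i : ℕ) : ℝ) ≤ T
  log_length_le : Real.log (length P) ≤ T
  le_mul_log_den : ∀ i, T ≤ σ * (r i * Real.log (β i).den)

namespace RothHypotheses

lemma mono {n : ℕ} {σ σ' T : ℝ} {r : Fin n → ℕ} {β : Fin n → ℚ} {P : MvPolynomial (Fin n) ℤ}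
    (h : RothHypotheses σ T r β P) (hσ : σ ≤ σ') : RothHypotheses σ' T r β P where
  __ := h
  le_mul i j hij := (h.le_mul i j hij).trans (by gcongr)
  le_mul_log_den i := by
    have : 0 ≤ Real.log (β i).den := Real.log_natCast_nonneg _
    exact (h.le_mul_log_den i).trans (by gcongr)

variable {n : ℕ} {σ T : ℝ} {r : Fin (n + 1) → ℕ} {β : Fin (n + 1) → ℚ}
  {P : MvPolynomial (Fin (n + 1)) ℤ}

lemma degree_zero_le (h : RothHypotheses σ T r β P) : (r 0 : ℝ) ≤ T := by
  refine le_trans ?_ h.sum_le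
  exact_mod_cast Finset.single_le_sum (f := r) (fun _ _ ↦ Nat.zero_le _) (Finset.mem_univ 0)

lemma sigma_pos (h : RothHypotheses σ T r β P) : 0 < σ := by
  have hT : 0 < T := (Nat.cast_pos.mpr (h.pos 0)).trans_le h.degree_zero_le
  refine pos_of_mul_pos_left (hT.trans_le (h.le_mul_log_den 0)) ?_
  exact mul_nonneg (Nat.cast_nonneg _) (Real.log_natCast_nonneg _)

lemma length_det_hasseDeriv_le (h : RothHypotheses σ T r β P) {l : ℕ} (hl : l ≤ r 0 + 1)
    (J : Fin l → Fin l → (Fin (n + 1) →₀ ℕ)) :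
    length (Matrix.of fun i j ↦ hasseDeriv (J i j) P).det ≤ Real.exp (3 * l * T) := by
  have hlT : (l : ℝ) ≤ T + 1 := by
    have : (l : ℝ) ≤ r 0 + 1 := by exact_mod_cast hl
    linarith [h.degree_zero_le]
  have hlen : length P ≤ Real.exp T :=
    (Real.log_le_iff_le_exp (zero_lt_one.trans_le (one_le_length h.ne_zero))).mp h.log_length_le
  have hpow : (2 : ℝ) ^ ∑ i, r i ≤ Real.exp T := by
    calc (2 : ℝ) ^ ∑ i, r i ≤ Real.exp 1 ^ ∑ i, r i := by
          gcongr
          linarith [Real.add_one_le_exp 1]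
      _ = Real.exp (∑ i, r i : ℕ) := by rw [← Real.exp_nat_mul, mul_one]
      _ ≤ _ := Real.exp_le_exp.mpr h.sum_le
  have hentry (i j : Fin l) : length (hasseDeriv (J i j) P) ≤ Real.exp (2 * T) := by
    calc length (hasseDeriv (J i j) P) ≤ 2 ^ (∑ i, r i) * length P :=
          length_hasseDeriv_le h.degreeOf_le _
      _ ≤ Real.exp T * Real.exp T := by gcongr; exact length_nonneg P
      _ = _ := by rw [← Real.exp_add, two_mul]
  calc _ ≤ (Fintype.card (Fin l)).factorial * Real.exp (2 * T) ^ Fintype.card (Fin l) :=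
        length_det_le hentry
    _ ≤ _ := by
        rw [Fintype.card_fin]
        exact factorial_mul_pow_le_exp hlT (Real.exp_nonneg _) le_rfl

lemma weight_tail_le (h : RothHypotheses σ T r β P) {I : Fin n →₀ ℕ} (hI : I.degree ≤ r 0) :
    Finsupp.weight (fun i : Fin n ↦ (r i.succ : ℝ)⁻¹) I ≤ σ := by
  have hr₀ : (0 : ℝ) < r 0 := by exact_mod_cast h.pos 0
  have hinv (j : Fin n) : (r j.succ : ℝ)⁻¹ ≤ σ / r 0 := by
    have hrj : (0 : ℝ) < r j.succ := by exact_mod_cast h.pos _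
    rw [inv_eq_one_div, div_le_div_iff₀ hrj hr₀, one_mul]
    exact h.le_mul 0 j.succ j.succ_pos
  calc Finsupp.weight (fun i : Fin n ↦ (r i.succ : ℝ)⁻¹) I
      = ∑ j, (I j : ℝ) * (r j.succ : ℝ)⁻¹ := by simp [Finsupp.weight_eq_sum]
    _ ≤ ∑ j, (I j : ℝ) * (σ / r 0) := by gcongr with j; exact hinv j
    _ = I.degree * (σ / r 0) := by rw [← Finset.sum_mul, Finsupp.degree_eq_sum, Nat.cast_sum]
    _ ≤ r 0 * (σ / r 0) := by
        have := h.sigma_pos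
        gcongr
    _ = σ := by field_simp

lemma slice (h : RothHypotheses σ T r β P) {l : ℕ} (hl₀ : 0 < l)
    {W : MvPolynomial (Fin (n + 1)) ℤ} (hdeg : ∀ i, degreeOf i W ≤ l * r i)
    (hlen : length W ≤ Real.exp (3 * l * T)) {e : ℕ} (he : (finSuccEquiv ℤ n W).coeff e ≠ 0) :
    RothHypotheses (3 * σ) (3 * l * T) (fun i ↦ l * r i.succ) (Fin.tail β)
      ((finSuccEquiv ℤ n W).coeff e) where
  ne_zero := he
  pos i := Nat.mul_pos hl₀ (h.pos _)
  degreeOf_le i := (degreeOf_coeff_finSuccEquiv _ _ _).trans (hdeg _)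
  le_mul i j hij := by
    have := h.le_mul i.succ j.succ (Fin.succ_lt_succ_iff.mpr hij)
    push_cast
    nlinarith [(r i.succ).cast_nonneg (α := ℝ), l.cast_nonneg (α := ℝ)]
  sum_le := by
    have : ∑ i : Fin n, r i.succ ≤ ∑ i, r i := by simp [Fin.sum_univ_succ]
    have hT : ((∑ i : Fin n, r i.succ : ℕ) : ℝ) ≤ T := le_trans (by exact_mod_cast this) h.sum_le
    rw [← Finset.mul_sum, Nat.cast_mul]
    nlinarith [mul_nonneg l.cast_nonneg ((r 0).cast_nonneg.trans h.degree_zero_le)]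
  log_length_le := by
    rw [Real.log_le_iff_le_exp (zero_lt_one.trans_le (one_le_length he))]
    exact (length_coeff_finSuccEquiv_le W e).trans hlen
  le_mul_log_den i := by
    calc 3 * l * T ≤ 3 * l * (σ * (r i.succ * Real.log (β i.succ).den)) := by
          gcongr
          exact h.le_mul_log_den i.succ
      _ = _ := by
          simp only [Fin.tail]
          push_cast
          ring

lemma rootMultiplicity_mul_inv_le (h : RothHypotheses σ T r β P) {l : ℕ} {V : Polynomial ℤ}
    (hV : V ≠ 0) (hlen : |(V.leadingCoeff : ℝ)| ≤ Real.exp (3 * l * T)) :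
    ((V.map (Int.castRingHom ℚ)).rootMultiplicity (β 0) : ℝ) * (r 0 : ℝ)⁻¹ ≤ 3 * l * σ := by
  set e := (V.map (Int.castRingHom ℚ)).rootMultiplicity (β 0)
  have hr₀ : (0 : ℝ) < r 0 := by exact_mod_cast h.pos 0
  have hlog : 0 < Real.log (β 0).den := by
    refine (Real.log_natCast_nonneg _).lt_of_ne fun h₀ ↦ ?_
    have := h.le_mul_log_den 0
    rw [← h₀, mul_zero, mul_zero] at this
    linarith [h.degree_zero_le]
  have hpow : ((β 0).den : ℝ) ^ e ≤ Real.exp (3 * l * T) := by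
    refine le_trans ?_ hlen
    have hle := Int.le_of_dvd (abs_pos.mpr (Polynomial.leadingCoeff_ne_zero.mpr hV))
      ((dvd_abs _ _).mpr (den_pow_rootMultiplicity_dvd_leadingCoeff V (β 0)))
    exact_mod_cast hle
  rw [← Real.log_le_iff_le_exp (by positivity), Real.log_pow] at hpow
  rw [← div_eq_mul_inv, div_le_iff₀ hr₀]
  refine le_of_mul_le_mul_right ?_ hlog
  calc e * Real.log (β 0).den ≤ 3 * l * T := hpow
    _ ≤ 3 * l * (σ * (r 0 * Real.log (β 0).den)) := by gcongr; exact h.le_mul_log_den 0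
    _ = _ := by ring

lemma indexGE_det (h : RothHypotheses σ T r β P) {l : ℕ} (hl : l ≤ r 0 + 1) {ε : ℝ}
    (hind : IndexGE (fun i ↦ (r i : ℝ)⁻¹) β ε P) {a : Fin l → ℕ} {I : Fin l → (Fin n →₀ ℕ)}
    (ha : ∀ j, a j ≤ j) (hI : ∀ i, (I i).degree ≤ i) :
    IndexGE (fun i ↦ (r i : ℝ)⁻¹) β (∑ j : Fin l, max 0 (ε - σ - j / r 0))
      (Matrix.of fun i j ↦ hasseDeriv ((I i).cons (a j)) P).det := by
  have hw (i) : (0 : ℝ) ≤ (r i : ℝ)⁻¹ := by positivity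
  refine IndexGE.det hw fun i j J hJ ↦ ?_
  have hJ' := (lt_max_iff.mp hJ).resolve_left (weight_nonneg hw J).not_gt
  refine hind.hasseDeriv _ J (hJ'.trans_le ?_)
  have hweight := h.weight_tail_le ((hI i).trans (Nat.lt_succ_iff.mp (i.2.trans_le hl)))
  have haj : (a j : ℝ) * (r 0 : ℝ)⁻¹ ≤ j / r 0 := by
    rw [div_eq_mul_inv]
    gcongr
    exact ha j
  rw [weight_cons]
  unfold Fin.tail
  linarith

lemma exists_weight_le_of_eq_outerMul (h : RothHypotheses σ T r β P) {l : ℕ} (hl : 0 < l)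
    {W : MvPolynomial (Fin (n + 1)) ℤ} {V : Polynomial ℤ} {U : MvPolynomial (Fin n) ℤ} {c : ℤ}
    (hW : C c * W = outerMul V U) (hV : V ≠ 0)
    (hlen : |(V.leadingCoeff : ℝ)| ≤ Real.exp (3 * l * T)) {τ : ℝ}
    (hU : ∃ J, Finsupp.weight (fun i : Fin n ↦ ((l * r i.succ : ℕ) : ℝ)⁻¹) J ≤ τ ∧
      aeval (Fin.tail β) (hasseDeriv J U) ≠ 0) :
    ∃ J, Finsupp.weight (fun i ↦ (r i : ℝ)⁻¹) J ≤ l * (3 * σ + τ) ∧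
      aeval β (hasseDeriv J W) ≠ 0 := by
  obtain ⟨J, hJ, hne⟩ := hU
  set e := (V.map (Int.castRingHom ℚ)).rootMultiplicity (β 0)
  have hl₀ : (0 : ℝ) < l := by exact_mod_cast hl
  have hscale : Finsupp.weight (fun i : Fin n ↦ ((l * r i.succ : ℕ) : ℝ)⁻¹) J =
      (l : ℝ)⁻¹ * Finsupp.weight (fun i : Fin n ↦ (r i.succ : ℝ)⁻¹) J := by
    simp only [Finsupp.weight_eq_sum, Finset.mul_sum, Nat.cast_mul, mul_inv, nsmul_eq_mul]
    exact Finset.sum_congr rfl fun i _ ↦ by ring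
  refine ⟨J.cons e, ?_, fun h₀ ↦ ?_⟩
  · rw [hscale, inv_mul_le_iff₀ hl₀] at hJ
    rw [weight_cons]
    unfold Fin.tail
    linarith [h.rootMultiplicity_mul_inv_le hV hlen]
  · have hsplit := congrArg (fun Q ↦ aeval β (hasseDeriv (J.cons e) Q)) hW
    simp only [← smul_eq_C_mul, map_smul, h₀, smul_zero, hasseDeriv_cons_outerMul,
      aeval_outerMul] at hsplit
    exact mul_ne_zero (aeval_hasseDeriv_rootMultiplicity_ne_zero hV (β 0)) hne hsplit.symm

theorem not_indexGE (h : RothHypotheses σ T r β P) {ε : ℝ} (hε : 0 < ε) (hε₁ : ε ≤ 1)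
    (hσε : σ ≤ ε ^ 2 / 64)
    (ih : ∀ T r β (U : MvPolynomial (Fin n) ℤ), RothHypotheses (3 * σ) T r β U →
      ∃ J, Finsupp.weight (fun i ↦ (r i : ℝ)⁻¹) J ≤ ε ^ 2 / 64 ∧ aeval β (hasseDeriv J U) ≠ 0) :
    ¬ IndexGE (fun i ↦ (r i : ℝ)⁻¹) β ε P := by
  intro hind
  have hσ := h.sigma_pos
  have hmap : map (Int.castRingHom ℚ) P ≠ 0 :=
    (map_ne_zero_iff _ (map_injective _ Int.cast_injective)).mpr h.ne_zero
  have hdeg₀ : degreeOf 0 (map (Int.castRingHom ℚ) P) ≤ r 0 := by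
    rw [degreeOf_def, degrees_map_of_injective _ Int.cast_injective, ← degreeOf_def]
    exact h.degreeOf_le 0
  obtain ⟨l, hl₀, hl, a, I, ha, hI, V, U, hV, hU, hdet⟩ :=
    exists_det_hasseDeriv_eq_outerMul hmap hdeg₀
  set W := (Matrix.of fun i j ↦ hasseDeriv ((I i).cons (a j)) P).det
  have hW : map (Int.castRingHom ℚ) W = outerMul V U :=
    (map_det_hasseDeriv _ _ P).trans hdet
  obtain ⟨c, -, e, I', V', hcoeff, hV', hU', hfactor⟩ := exists_C_mul_eq_outerMul hV hU hW
  have hlen : length W ≤ Real.exp (3 * l * T) := h.length_det_hasseDeriv_le hl _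
  have hdeg (i) : degreeOf i W ≤ l * r i := by
    simpa using degreeOf_det_le (M := Matrix.of fun i j ↦ hasseDeriv ((I i).cons (a j)) P)
      fun _ _ ↦ (degreeOf_hasseDeriv_le i _ P).trans (h.degreeOf_le i)
  have hlead : |(V'.leadingCoeff : ℝ)| ≤ Real.exp (3 * l * T) := by
    refine le_trans ?_ ((norm_coeff_le_length W (I'.cons V'.natDegree)).trans hlen)
    rw [← hcoeff, Int.norm_eq_abs, Polynomial.leadingCoeff]
  obtain ⟨J, hJ, hne⟩ := h.exists_weight_le_of_eq_outerMul hl₀ hfactor hV' hlead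
    (ih _ _ _ _ (h.slice hl₀ hdeg hlen hU'))
  have hlow : ∑ j : Fin l, max 0 (ε - σ - j / r 0) ≤ Finsupp.weight (fun i ↦ (r i : ℝ)⁻¹) J :=
    not_lt.mp fun hlt ↦ hne (h.indexGE_det hl hind ha hI J hlt)
  have hsq : l * (ε - σ) ^ 2 / 8 ≤ l * (3 * σ + ε ^ 2 / 64) :=
    (mul_sq_div_eight_le_sum_max (h.pos 0) hl (by nlinarith) (by linarith)).trans
      (hlow.trans hJ)
  have hbound : (ε - σ) ^ 2 / 8 ≤ 3 * σ + ε ^ 2 / 64 := by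
    rw [mul_div_assoc] at hsq
    exact le_of_mul_le_mul_left hsq (by exact_mod_cast hl₀)
  have hlower : (63 / 64 * ε) ^ 2 ≤ (ε - σ) ^ 2 := by
    gcongr
    nlinarith
  nlinarith [sq_pos_of_pos hε]

end RothHypotheses

theorem roth_lemma (n : ℕ) {ε : ℝ} (hε : 0 < ε) :
    ∃ σ > 0, ∀ T r β (P : MvPolynomial (Fin n) ℤ), RothHypotheses σ T r β P →
      ∃ J, Finsupp.weight (fun i ↦ (r i : ℝ)⁻¹) J ≤ ε ∧ aeval β (hasseDeriv J P) ≠ 0 := by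
  induction n generalizing ε with
  | zero =>
    refine ⟨1, one_pos, fun T r β P h ↦ ⟨0, by simpa using hε.le, ?_⟩⟩
    have hP := h.ne_zero
    rw [eq_C_of_isEmpty P] at hP ⊢
    rw [hasseDeriv_zero, aeval_C]
    simpa using hP
  | succ n ih =>
    set ε₁ := min ε 1
    have hε₁ : 0 < ε₁ := lt_min hε one_pos
    obtain ⟨σ, hσ, ih⟩ := ih (show 0 < ε₁ ^ 2 / 64 by positivity)
    refine ⟨min (σ / 3) (ε₁ ^ 2 / 64), by positivity, fun T r β P h ↦ ?_⟩
    have hnot := h.not_indexGE hε₁ (min_le_right _ _) (min_le_right _ _)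
      fun T r β U hU ↦ ih T r β U (hU.mono (by linarith [min_le_left (σ / 3) (ε₁ ^ 2 / 64)]))
    simp only [IndexGE, not_forall] at hnot
    obtain ⟨J, hJ, hne⟩ := hnot
    exact ⟨J, hJ.le.trans (min_le_left _ _), hne⟩

end RothLemma

section Counting

lemma sum_exp_le {r : ℕ} (hr : 0 < r) (x : ℝ) :
    ∑ a ∈ Finset.range (r + 1), Real.exp (x * (1 / 2 - a / r)) ≤
      (r + 1) * Real.exp (x ^ 2 / 8) := by
  have hr₀ : (0 : ℝ) < r := by exact_mod_cast hr
  have hreflect : ∑ a ∈ Finset.range (r + 1), Real.exp (x * (1 / 2 - a / r)) =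
      ∑ a ∈ Finset.range (r + 1), Real.exp (-(x * (1 / 2 - a / r))) := by
    rw [← Finset.sum_range_reflect]
    refine Finset.sum_congr rfl fun a ha ↦ ?_
    rw [Nat.add_sub_cancel, Nat.cast_sub (Nat.lt_succ_iff.mp (Finset.mem_range.mp ha))]
    congr 1
    field_simp
    ring
  have hterm {a : ℕ} (ha : a ∈ Finset.range (r + 1)) :
      Real.cosh (x * (1 / 2 - a / r)) ≤ Real.exp (x ^ 2 / 8) := by
    have ha₁ : (a : ℝ) / r ≤ 1 := by
      rw [div_le_one hr₀]
      exact_mod_cast Nat.lt_succ_iff.mp (Finset.mem_range.mp ha)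
    have ha₀ : 0 ≤ (a : ℝ) / r := by positivity
    refine (Real.cosh_le_exp_half_sq _).trans (Real.exp_le_exp.mpr ?_)
    nlinarith [sq_nonneg x, mul_nonneg ha₀ (sub_nonneg.mpr ha₁)]
  calc ∑ a ∈ Finset.range (r + 1), Real.exp (x * (1 / 2 - a / r))
      = ∑ a ∈ Finset.range (r + 1), Real.cosh (x * (1 / 2 - a / r)) := by
        simp only [Real.cosh_eq, ← Finset.sum_div, Finset.sum_add_distrib, ← hreflect]
        ring
    _ ≤ ∑ a ∈ Finset.range (r + 1), Real.exp (x ^ 2 / 8) := Finset.sum_le_sum fun a ↦ hterm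
    _ = _ := by simp

/- The Chernoff bound, for coordinates `J i / r i` that are uniformly distributed and
independent. -/
theorem card_weight_lt_le {σ : Type*} [Fintype σ] {r : σ → ℕ} (hr : ∀ i, 0 < r i) {η : ℝ}
    (hη : 0 ≤ η) :
    (((box r).filter fun J ↦ Finsupp.weight (fun i ↦ (r i : ℝ)⁻¹) J <
      Fintype.card σ * (1 / 2 - η)).card : ℝ) ≤
      Real.exp (-2 * η ^ 2 * Fintype.card σ) * (box r).card := by
  set m : ℝ := (Fintype.card σ : ℝ)
  have hmarkov (J : σ →₀ ℕ)
      (hJ : Finsupp.weight (fun i ↦ (r i : ℝ)⁻¹) J < m * (1 / 2 - η)) :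
      1 ≤ Real.exp (-4 * η ^ 2 * m) * ∏ i, Real.exp (4 * η * (1 / 2 - J i / r i)) := by
    rw [← Real.exp_sum, ← Real.exp_add, ← Finset.mul_sum, Finset.sum_sub_distrib]
    have hweight : Finsupp.weight (fun i ↦ (r i : ℝ)⁻¹) J = ∑ i, (J i : ℝ) / r i := by
      simp [Finsupp.weight_eq_sum, div_eq_mul_inv]
    simp only [Finset.sum_const, Finset.card_univ, nsmul_eq_mul, ← hweight]
    refine Real.one_le_exp ?_
    nlinarith
  calc (((box r).filter fun J ↦ Finsupp.weight (fun i ↦ (r i : ℝ)⁻¹) J <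
        m * (1 / 2 - η)).card : ℝ)
      ≤ ∑ J ∈ box r, Real.exp (-4 * η ^ 2 * m) *
          ∏ i, Real.exp (4 * η * (1 / 2 - J i / r i)) := by
        rw [Finset.card_eq_sum_ones, Nat.cast_sum, Nat.cast_one]
        refine (Finset.sum_le_sum fun J hJ ↦ hmarkov J (Finset.mem_filter.mp hJ).2).trans ?_
        exact Finset.sum_le_sum_of_subset_of_nonneg (Finset.filter_subset _ _)
          fun J _ _ ↦ by positivity
    _ = Real.exp (-4 * η ^ 2 * m) *
          ∏ i, ∑ a ∈ Finset.range (r i + 1), Real.exp (4 * η * (1 / 2 - a / r i)) := by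
        rw [← Finset.mul_sum, sum_box_prod r fun i a ↦ Real.exp (4 * η * (1 / 2 - a / r i))]
    _ ≤ Real.exp (-4 * η ^ 2 * m) * ∏ i, ((r i + 1) * Real.exp ((4 * η) ^ 2 / 8)) := by
        gcongr with i
        exact sum_exp_le (hr i) _
    _ = _ := by
        rw [Finset.prod_mul_distrib, Finset.prod_const, Finset.card_univ, ← Real.exp_nat_mul,
          mul_left_comm, ← Real.exp_add, card_box, mul_comm]
        simp only [m]
        push_cast
        ring_nf

end Counting

section Siegel

attribute [local instance] Matrix.seminormedAddCommGroup in
theorem exists_int_vec_abs_le_of_two_mul_card_le {ρ κ : Type*} [Fintype ρ] [Fintype κ]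
    [Nonempty κ] (h : 2 * Fintype.card ρ ≤ Fintype.card κ) {A : Matrix ρ κ ℤ} {D : ℝ} (hD : 1 ≤ D)
    (hA : ∀ i j, |(A i j : ℝ)| ≤ D) :
    ∃ t : κ → ℤ, t ≠ 0 ∧ A.mulVec t = 0 ∧ ∀ j, |(t j : ℝ)| ≤ Fintype.card κ * D := by
  have hκ : (1 : ℝ) ≤ Fintype.card κ := by exact_mod_cast Fintype.card_pos (α := κ)
  have hκD : 1 ≤ Fintype.card κ * D := one_le_mul_of_one_le_of_one_le hκ hD
  rcases isEmpty_or_nonempty ρ with hρ | hρ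
  · exact ⟨1, one_ne_zero, Subsingleton.elim _ _, fun j ↦ by simpa using hκD⟩
  obtain ⟨t, ht₀, ht, hnorm⟩ := Int.Matrix.exists_ne_zero_int_vec_norm_le A
    (by have := Fintype.card_pos (α := ρ); lia) Fintype.card_pos
  have hmax : max 1 ‖A‖ ≤ D :=
    max_le hD ((Matrix.norm_le_iff (zero_le_one.trans hD)).mpr fun i j ↦ by
      simpa only [Int.norm_eq_abs] using hA i j)
  have hcard : 2 * (Fintype.card ρ : ℝ) ≤ Fintype.card κ := by exact_mod_cast h
  have hexp : (Fintype.card ρ : ℝ) / (Fintype.card κ - Fintype.card ρ) ≤ 1 := by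
    rw [div_le_one (by linarith)]
    linarith
  refine ⟨t, ht₀, ht, fun j ↦ ?_⟩
  calc |(t j : ℝ)| = ‖t j‖ := (Int.norm_eq_abs _).symm
    _ ≤ ‖t‖ := norm_le_pi_norm t j
    _ ≤ (Fintype.card κ * max 1 ‖A‖) ^
          ((Fintype.card ρ : ℝ) / (Fintype.card κ - Fintype.card ρ)) := hnorm
    _ ≤ (Fintype.card κ * max 1 ‖A‖) ^ (1 : ℝ) := by
        gcongr
        exact one_le_mul_of_one_le_of_one_le hκ (le_max_left _ _)
    _ ≤ Fintype.card κ * D := by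
        rw [Real.rpow_one]
        gcongr

end Siegel

section AuxiliaryPolynomial

variable {A : Type*} [CommRing A]

theorem exists_pow_eq_sum_smul {α : A} (hα : IsIntegral ℤ α) :
    ∃ (s : ℕ) (v : Fin (s + 1) → A) (B : ℝ), 1 ≤ B ∧ ∀ e : ℕ, ∃ c : Fin (s + 1) → ℤ,
      α ^ e = ∑ i, c i • v i ∧ ∑ i, |(c i : ℝ)| ≤ B ^ e := by
  obtain ⟨s, v, hv⟩ := Submodule.fg_iff_exists_fin_generating_family.mp hα.fg_adjoin_singleton
  set v' : Fin (s + 1) → A := Fin.cons 1 v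
  have hmem (i) : v' i ∈ Algebra.adjoin ℤ {α} := by
    refine Fin.cases (one_mem _) (fun i ↦ ?_) i
    rw [← Subalgebra.mem_toSubmodule, ← hv]
    exact Submodule.subset_span ⟨i, rfl⟩
  have hmul (i) : ∃ c : Fin (s + 1) → ℤ, ∑ j, c j • v' j = α * v' i := by
    have h : α * v' i ∈ Submodule.span ℤ (Set.range v) := by
      rw [hv, Subalgebra.mem_toSubmodule]
      exact mul_mem (Algebra.self_mem_adjoin_singleton ℤ α) (hmem i)
    obtain ⟨c, hc⟩ := (Submodule.mem_span_range_iff_exists_fun ℤ).mp h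
    exact ⟨Fin.cons 0 c, by simpa [Fin.sum_univ_succ, v'] using hc⟩
  choose M hM using hmul
  set B : ℝ := 1 + ∑ i, ∑ j, |(M i j : ℝ)|
  have hrow (i) : ∑ j, |(M i j : ℝ)| ≤ B := by
    refine (Finset.single_le_sum (f := fun i ↦ ∑ j, |(M i j : ℝ)|)
      (fun _ _ ↦ by positivity) (Finset.mem_univ i)).trans ?_
    simp [B]
  refine ⟨s, v', B, by simp only [B, le_add_iff_nonneg_right]; positivity, fun e ↦ ?_⟩
  induction e with
  | zero => exact ⟨Pi.single 0 1, by simp [Fin.sum_univ_succ, v'], by simp [Fin.sum_univ_succ]⟩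
  | succ e ih =>
    obtain ⟨c, hc, hcB⟩ := ih
    refine ⟨fun j ↦ ∑ i, c i * M i j, ?_, ?_⟩
    · simp only [pow_succ', hc, Finset.mul_sum, mul_smul_comm, ← hM, Finset.smul_sum,
        Finset.sum_smul, mul_smul]
      exact Finset.sum_comm
    · calc ∑ j, |((∑ i, c i * M i j : ℤ) : ℝ)| ≤ ∑ j, ∑ i, |(c i : ℝ)| * |(M i j : ℝ)| := by
            gcongr with j
            push_cast
            simpa only [abs_mul] using
              Finset.abs_sum_le_sum_abs (fun i ↦ (c i : ℝ) * M i j) Finset.univ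
        _ = ∑ i, |(c i : ℝ)| * ∑ j, |(M i j : ℝ)| := by
            rw [Finset.sum_comm]
            simp only [Finset.mul_sum]
        _ ≤ ∑ i, |(c i : ℝ)| * B := by gcongr with i; exact hrow i
        _ ≤ B ^ (e + 1) := by
            rw [← Finset.sum_mul, pow_succ]
            gcongr

variable {σ : Type*}

lemma coeff_sum_monomial_finset {R : Type*} [CommSemiring R] {s : Finset (σ →₀ ℕ)} (t : s → R)
    (K : s) : coeff K (∑ L : s, monomial L.1 (t L)) = t K := by
  classical
  simp [coeff_sum, coeff_monomial]

lemma support_sum_monomial_finset_subset {R : Type*} [CommSemiring R] {s : Finset (σ →₀ ℕ)}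
    (t : s → R) : (∑ L : s, monomial L.1 (t L)).support ⊆ s := by
  classical
  refine support_sum.trans (Finset.biUnion_subset.mpr fun L _ ↦ ?_)
  exact support_monomial_subset.trans (Finset.singleton_subset_iff.mpr L.2)

lemma aeval_const_monomial (α : A) (K : σ →₀ ℕ) (z : ℤ) :
    aeval (fun _ ↦ α) (monomial K z) = z • α ^ K.degree := by
  rw [aeval_monomial, Finsupp.prod, Finset.prod_pow_eq_pow_sum, ← Finsupp.degree_apply,
    algebraMap_int_eq, eq_intCast, zsmul_eq_mul]

variable [Fintype σ]

lemma prod_choose_le {r : σ → ℕ} {K : σ →₀ ℕ} (hK : K ∈ box r) (J : σ →₀ ℕ) :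
    ∏ i, (K i).choose (J i) ≤ 2 ^ ∑ i, r i := by
  rw [← Finset.prod_pow_eq_pow_sum]
  exact Finset.prod_le_prod' fun i _ ↦ (Nat.choose_le_two_pow _ _).trans
    (Nat.pow_le_pow_right two_pos (mem_box.mp hK i))

lemma abs_prod_choose_mul_le {ι : Type*} [Fintype ι] {c : ℕ → ι → ℤ} {B : ℝ} (hB : 1 ≤ B)
    (hc : ∀ e, ∑ i, |(c e i : ℝ)| ≤ B ^ e) {r : σ → ℕ} {K : σ →₀ ℕ} (hK : K ∈ box r)
    (J : σ →₀ ℕ) (i : ι) :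
    |(((∏ j, (K j).choose (J j) : ℕ) * c (K - J).degree i : ℤ) : ℝ)| ≤
      (2 * B) ^ ∑ j, r j := by
  have hdeg : (K - J).degree ≤ ∑ j, r j := by
    rw [Finsupp.degree_eq_sum]
    exact Finset.sum_le_sum fun j _ ↦ (Nat.sub_le _ _).trans (mem_box.mp hK j)
  have hci : |(c (K - J).degree i : ℝ)| ≤ B ^ ∑ j, r j :=
    calc |(c (K - J).degree i : ℝ)| ≤ ∑ i, |(c (K - J).degree i : ℝ)| :=
          Finset.single_le_sum (f := fun i ↦ |(c (K - J).degree i : ℝ)|)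
            (fun _ _ ↦ abs_nonneg _) (Finset.mem_univ i)
      _ ≤ B ^ (K - J).degree := hc _
      _ ≤ _ := by gcongr
  rw [Int.cast_mul, Int.cast_natCast, abs_mul, Nat.abs_cast, mul_pow]
  gcongr
  exact_mod_cast prod_choose_le hK J

lemma aeval_hasseDeriv_sum_monomial {ι : Type*} [Fintype ι] {α : A} {v : ι → A} {c : ℕ → ι → ℤ}
    (hc : ∀ e, α ^ e = ∑ i, c e i • v i) {s : Finset (σ →₀ ℕ)} (t : s → ℤ) (J : σ →₀ ℕ) :
    aeval (fun _ ↦ α) (hasseDeriv J (∑ K : s, monomial K.1 (t K))) =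
      ∑ i, (∑ K : s, (∏ j, (K.1 j).choose (J j) : ℕ) * c (K.1 - J).degree i * t K) • v i := by
  simp only [map_sum, hasseDeriv_monomial, aeval_const_monomial, hc, Finset.smul_sum, smul_smul,
    Finset.sum_smul]
  rw [Finset.sum_comm]
  refine Finset.sum_congr rfl fun i _ ↦ Finset.sum_congr rfl fun K _ ↦ ?_
  congr 1
  ring

/- Each condition on `P` amounts to `Fintype.card ι` integer linear equations in its
coefficients, which Siegel's lemma solves. -/
theorem exists_forall_aeval_hasseDeriv_eq_zero {ι : Type*} [Fintype ι] {α : A} {v : ι → A} {B : ℝ}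
    (hB : 1 ≤ B) (hα : ∀ e : ℕ, ∃ c : ι → ℤ, α ^ e = ∑ i, c i • v i ∧ ∑ i, |(c i : ℝ)| ≤ B ^ e)
    {r : σ → ℕ} {S : Finset (σ →₀ ℕ)} (hS : 2 * (S.card * Fintype.card ι) ≤ (box r).card) :
    ∃ P : MvPolynomial σ ℤ, P ≠ 0 ∧ (∀ i, degreeOf i P ≤ r i) ∧
      length P ≤ (8 * B) ^ ∑ i, r i ∧
      ∀ J ∈ S, aeval (fun _ ↦ α) (hasseDeriv J P) = 0 := by
  choose c hc hcB using hα
  set N := ∑ i, r i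
  have hcard : ((box r).card : ℝ) ≤ 2 ^ N := by exact_mod_cast card_box_le r
  let M : Matrix (S × ι) (box r) ℤ := Matrix.of fun J K ↦
    (∏ j, (K.1 j).choose (J.1.1 j) : ℕ) * c (K.1 - J.1.1).degree J.2
  have : Nonempty (box r) := ⟨0, by simp⟩
  obtain ⟨t, ht₀, ht, htB⟩ := exists_int_vec_abs_le_of_two_mul_card_le (A := M)
    (by rwa [Fintype.card_prod, Fintype.card_coe, Fintype.card_coe])
    (one_le_pow₀ (by linarith : 1 ≤ 2 * B)) fun J K ↦ abs_prod_choose_mul_le hB hcB K.2 J.1.1 J.2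
  refine ⟨∑ K : box r, monomial K.1 (t K), fun h ↦ ht₀ ?_,
    support_subset_box_iff.mp (support_sum_monomial_finset_subset t), ?_, fun J hJ ↦ ?_⟩
  · ext K
    rw [← coeff_sum_monomial_finset t, h, coeff_zero, Pi.zero_apply]
  · calc length (∑ K : box r, monomial K.1 (t K)) ≤ ∑ K : box r, (2 ^ N * (2 * B) ^ N) := by
          refine (length_sum_le _ _).trans (Finset.sum_le_sum fun K _ ↦ ?_)
          refine (length_monomial_le _ _).trans ?_
          rw [Int.norm_eq_abs]
          refine (htB K).trans ?_
          rw [Fintype.card_coe]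
          gcongr
      _ = (box r).card * (2 ^ N * (2 * B) ^ N) := by simp
      _ ≤ 2 ^ N * (2 ^ N * (2 * B) ^ N) := by gcongr
      _ = _ := by
          rw [← mul_pow, ← mul_pow]
          ring_nf
  · rw [aeval_hasseDeriv_sum_monomial hc]
    refine Finset.sum_eq_zero fun i _ ↦ ?_
    have hrow : ∑ K : box r, M (⟨J, hJ⟩, i) K * t K = 0 := congrFun ht (⟨J, hJ⟩, i)
    simp only [M, Matrix.of_apply] at hrow
    rw [hrow, zero_smul]

theorem exists_indexGE_const {α : A} (hα : IsIntegral ℤ α) :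
    ∃ s B : ℝ, 1 ≤ B ∧ ∀ (m : ℕ) (η : ℝ), 0 ≤ η → s * Real.exp (-2 * η ^ 2 * m) ≤ 1 / 2 →
      ∀ r : Fin m → ℕ, (∀ i, 0 < r i) → ∃ P : MvPolynomial (Fin m) ℤ, P ≠ 0 ∧
        (∀ i, degreeOf i P ≤ r i) ∧ length P ≤ (8 * B) ^ ∑ i, r i ∧
        IndexGE (fun i ↦ (r i : ℝ)⁻¹) (fun _ ↦ α) (m * (1 / 2 - η)) P := by
  obtain ⟨s, v, B, hB, hα⟩ := exists_pow_eq_sum_smul hα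
  refine ⟨s + 1, B, hB, fun m η hη hm r hr ↦ ?_⟩
  have hcard := card_weight_lt_le hr hη
  rw [Fintype.card_fin] at hcard
  obtain ⟨P, hP, hdeg, hlen, hzero⟩ := exists_forall_aeval_hasseDeriv_eq_zero hB hα
    (r := r) (S := (box r).filter fun J ↦ Finsupp.weight (fun i ↦ (r i : ℝ)⁻¹) J <
      m * (1 / 2 - η)) <| by
    rify
    rw [Fintype.card_fin]
    push_cast
    nlinarith [(box r).card.cast_nonneg (α := ℝ)]
  refine ⟨P, hP, hdeg, hlen, fun J hJ ↦ ?_⟩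
  by_cases hbox : J ∈ box r
  · exact hzero J (Finset.mem_filter.mpr ⟨hbox, hJ⟩)
  · simp only [mem_box, not_forall, not_le] at hbox
    obtain ⟨i, hi⟩ := hbox
    rw [hasseDeriv_eq_zero_of_degreeOf_lt ((hdeg i).trans_lt hi), map_zero]

end AuxiliaryPolynomial

section Evaluation

variable {σ : Type*} [Fintype σ] {r : σ → ℕ} {Q : MvPolynomial σ ℤ}

lemma one_le_abs_aeval_mul_prod_den_pow (hQ : ∀ i, degreeOf i Q ≤ r i) {β : σ → ℚ}
    (hβ : aeval β Q ≠ 0) : 1 ≤ |aeval β Q| * ∏ i, ((β i).den : ℚ) ^ r i := by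
  have hint : aeval β Q * ∏ i, ((β i).den : ℚ) ^ r i =
      (∑ K ∈ Q.support, coeff K Q * ∏ i, ((β i).num ^ K i * (β i).den ^ (r i - K i)) : ℤ) := by
    rw [aeval_def, eval₂_eq', Finset.sum_mul]
    push_cast
    refine Finset.sum_congr rfl fun K hK ↦ ?_
    rw [algebraMap_int_eq, eq_intCast, mul_assoc, ← Finset.prod_mul_distrib]
    congr 1
    refine Finset.prod_congr rfl fun i _ ↦ ?_
    have hKr := mem_box.mp (support_subset_box_iff.mpr hQ hK) i
    rw [← pow_mul_pow_sub _ hKr, ← mul_assoc, ← mul_pow, Rat.mul_den_eq_num]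
  have hden : 0 < ∏ i, ((β i).den : ℚ) ^ r i :=
    Finset.prod_pos fun i _ ↦ pow_pos (mod_cast (β i).den_pos) _
  have hne := mul_ne_zero hβ hden.ne'
  rw [← abs_of_pos hden, ← abs_mul, hint]
  rw [hint] at hne
  exact_mod_cast Int.one_le_abs (by exact_mod_cast hne)

lemma abs_aeval_le_of_indexGE (hQ : ∀ i, degreeOf i Q ≤ r i) {a b : σ → ℝ} {A G t : ℝ}
    (hA : 1 ≤ A) (ha : ∀ i, |a i| ≤ A) (hG : 0 ≤ G) (hab : ∀ i, |b i - a i| ≤ Real.exp (-G / r i))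
    (ht : IndexGE (fun i ↦ (r i : ℝ)⁻¹) a t Q) :
    |aeval b Q| ≤ (4 * A) ^ (∑ i, r i) * length Q * Real.exp (-(G * t)) := by
  set N := ∑ i, r i
  have hterm (K : σ →₀ ℕ) : |aeval a (hasseDeriv K Q) * ∏ i, (b i - a i) ^ K i| ≤
      2 ^ N * length Q * A ^ N * Real.exp (-(G * t)) := by
    rw [abs_mul]
    rcases lt_or_ge (Finsupp.weight (fun i ↦ (r i : ℝ)⁻¹) K) t with hK | hK
    · rw [ht K hK, abs_zero, zero_mul]
      have := length_nonneg Q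
      positivity
    have hderiv : |aeval a (hasseDeriv K Q)| ≤ 2 ^ N * length Q * A ^ N :=
      (abs_aeval_le (fun i ↦ (degreeOf_hasseDeriv_le i K Q).trans (hQ i)) hA ha).trans <|
        mul_le_mul_of_nonneg_right (length_hasseDeriv_le hQ K) (by positivity)
    have hprod : |∏ i, (b i - a i) ^ K i| ≤ Real.exp (-(G * t)) :=
      calc |∏ i, (b i - a i) ^ K i| ≤ ∏ i, Real.exp (-G / r i) ^ K i := by
            rw [Finset.abs_prod]
            refine Finset.prod_le_prod (fun _ _ ↦ abs_nonneg _) fun i _ ↦ ?_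
            rw [abs_pow]
            exact pow_le_pow_left₀ (abs_nonneg _) (hab i) _
        _ = Real.exp (-(G * Finsupp.weight (fun i ↦ (r i : ℝ)⁻¹) K)) := by
            simp only [Finsupp.weight_apply, Finsupp.sum_fintype, zero_smul, implies_true,
              Finset.mul_sum, ← Finset.sum_neg_distrib, Real.exp_sum, ← Real.exp_nat_mul]
            refine Finset.prod_congr rfl fun i _ ↦ congrArg Real.exp ?_
            rw [nsmul_eq_mul]
            ring
        _ ≤ _ := by gcongr
    exact mul_le_mul hderiv hprod (abs_nonneg _) ((abs_nonneg _).trans hderiv)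
  calc |aeval b Q| ≤ ∑ K ∈ box r, 2 ^ N * length Q * A ^ N * Real.exp (-(G * t)) := by
        rw [aeval_eq_sum_hasseDeriv hQ a b]
        exact (Finset.abs_sum_le_sum_abs _ _).trans (Finset.sum_le_sum fun K _ ↦ hterm K)
    _ ≤ 2 ^ N * (2 ^ N * length Q * A ^ N * Real.exp (-(G * t))) := by
        rw [Finset.sum_const, nsmul_eq_mul]
        have := length_nonneg Q
        gcongr
        exact_mod_cast card_box_le r
    _ = _ := by
        rw [show (4 : ℝ) = 2 * 2 by norm_num, mul_pow, mul_pow]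
        ring

end Evaluation

section Approximation

lemma exists_rat_of_liouvilleWith {α p τ : ℝ} (h : LiouvilleWith p α) (hp : 1 < p) (hτ : 0 < τ)
    (hτp : τ < p) (x : ℝ) :
    ∃ β : ℚ, |α - β| < (β.den : ℝ) ^ (-τ) ∧ x ≤ Real.log β.den := by
  have hlim := (tendsto_rpow_neg_atTop hτ).comp tendsto_natCast_atTop_atTop
  have hfar := hlim.eventually
    ((h.irrational hp).eventually_forall_le_dist_cast_rat_of_den_le ⌈Real.exp x⌉₊)
  obtain ⟨n, ⟨m, -, hlt⟩, hfar, hn⟩ := ((h.frequently_lt_rpow_neg hτp).and_eventually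
    (hfar.and (Filter.eventually_gt_atTop 0))).exists
  have hβ : |α - (m / n : ℚ)| < (n : ℝ) ^ (-τ) := by exact_mod_cast hlt
  have hden : (m / n : ℚ).den ≤ n :=
    Nat.le_of_dvd hn (by exact_mod_cast Rat.den_dvd m n)
  refine ⟨m / n, hβ.trans_le ?_, ?_⟩
  · exact Real.rpow_le_rpow_of_nonpos (mod_cast Rat.den_pos _) (mod_cast hden) (by linarith)
  · rw [Real.le_log_iff_exp_le (mod_cast Rat.den_pos _), ← Nat.ceil_le]
    by_contra! hsmall
    exact (hfar _ hsmall.le).not_gt hβ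

lemma exists_fin_gap {X : Type*} {S : X → Prop} {f : X → ℝ} (h : ∀ x : ℝ, ∃ y, S y ∧ x ≤ f y)
    (L D : ℝ) (m : ℕ) :
    ∃ y : Fin m → X, (∀ i, S (y i) ∧ L ≤ f (y i)) ∧ ∀ i j, i < j → D * f (y j) ≤ f (y i) := by
  induction m with
  | zero => exact ⟨Fin.elim0, fun i ↦ i.elim0, fun i ↦ i.elim0⟩
  | succ m ih =>
    obtain ⟨y, hy, hgap⟩ := ih
    obtain ⟨z, hz, hzf⟩ := h (max L (∑ j, |D * f (y j)|))
    refine ⟨Fin.cons z y, Fin.cases ⟨hz, (le_max_left _ _).trans hzf⟩ hy, ?_⟩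
    refine Fin.cases (Fin.cases (absurd · (lt_irrefl _)) fun j _ ↦ ?_) fun i ↦
      Fin.cases (absurd · (Fin.not_lt_zero _)) fun j hij ↦ hgap i j (Fin.succ_lt_succ_iff.mp hij)
    have hle := Finset.single_le_sum (f := fun j ↦ |D * f (y j)|) (fun _ _ ↦ abs_nonneg _)
      (Finset.mem_univ j)
    exact (le_abs_self _).trans (hle.trans ((le_max_right _ _).trans hzf))

lemma exists_nat_mul_near {ι : Type*} [Finite ι] {u : ι → ℝ} (hu : ∀ i, 0 < u i) {ν : ℝ}
    (hν : 0 < ν) :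
    ∃ R > (0 : ℝ), ∃ r : ι → ℕ, ∀ i, 0 < r i ∧ R ≤ r i * u i ∧ r i * u i ≤ (1 + ν) * R := by
  cases nonempty_fintype ι
  have hdiv (i : ι) : 0 < u i / ν := div_pos (hu i) hν
  set R := 1 + ∑ i, u i / ν
  have hR : 0 < R := add_pos_of_pos_of_nonneg one_pos (Finset.sum_nonneg fun i _ ↦ (hdiv i).le)
  refine ⟨R, hR, fun i ↦ ⌈R / u i⌉₊, fun i ↦ ?_⟩
  have hRu : 0 < R / u i := div_pos hR (hu i)
  have huR : u i ≤ ν * R := by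
    have hle := Finset.single_le_sum (fun i _ ↦ (hdiv i).le) (Finset.mem_univ i)
    rw [← div_le_iff₀' hν]
    linarith
  refine ⟨Nat.ceil_pos.mpr hRu, (div_le_iff₀ (hu i)).mp (Nat.le_ceil _), ?_⟩
  calc ⌈R / u i⌉₊ * u i ≤ (R / u i + 1) * u i := by
        gcongr
        · exact (hu i).le
        · exact (Nat.ceil_lt_add_one hRu.le).le
    _ = R + u i := by rw [add_mul, div_mul_cancel₀ _ (hu i).ne', one_mul]
    _ ≤ (1 + ν) * R := by linarith

/-- Rational approximations `β i` of quality `τ` to `α`, with exponents `r i` which make the numbers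
`(β i).den ^ r i` nearly equal, of size between `exp R` and `exp ((1 + ν) * R)`. The denominators
are so large and grow so fast (with decreasing `i`) that the `r i` fulfil the smallness conditions
of Roth's lemma with parameter `σ`, in a form which also controls constants `exp (c * ∑ i, r i)`. -/
structure RothApproximation {m : ℕ} (α τ σ ν c R : ℝ) (r : Fin m → ℕ) (β : Fin m → ℚ) : Prop where
  pos : ∀ i, 0 < r i
  abs_sub_le : ∀ i, |β i - α| ≤ Real.exp (-(τ * R) / r i)
  le_mul_log_den : ∀ i, R ≤ r i * Real.log (β i).den
  mul_log_den_le : ∀ i, r i * Real.log (β i).den ≤ (1 + ν) * R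
  le_mul : ∀ i j, i < j → (r i : ℝ) ≤ σ * r j
  mul_sum_le : c * (∑ i, r i : ℕ) ≤ σ * R

lemma exists_rothApproximation {α p τ : ℝ} (h : LiouvilleWith p α) (hp : 1 < p) (hτ : 0 < τ)
    (hτp : τ < p) {σ ν : ℝ} (hσ : 0 < σ) (hν : 0 < ν) (hν₁ : ν ≤ 1) (c : ℝ) (m : ℕ) :
    ∃ R > 0, ∃ r β, RothApproximation (m := m) α τ σ ν c R r β := by
  obtain ⟨β, hβ, hgap⟩ := exists_fin_gap (exists_rat_of_liouvilleWith h hp hτ hτp)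
    (max 1 (2 * m * c / σ)) (2 / σ) m
  have hu (i : Fin m) : 0 < Real.log (β i).den :=
    one_pos.trans_le ((le_max_left _ _).trans (hβ i).2)
  obtain ⟨R, hR, r, hr⟩ := exists_nat_mul_near hu hν
  choose hpos hle hle' using hr
  have hle₂ (i : Fin m) : r i * Real.log (β i).den ≤ 2 * R := (hle' i).trans (by gcongr; linarith)
  refine ⟨R, hR, r, β, hpos, fun i ↦ ?_, hle, hle', fun i j hij ↦ ?_, ?_⟩
  · have hr₀ : (0 : ℝ) < r i := mod_cast hpos i
    rw [abs_sub_comm]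
    refine (hβ i).1.le.trans ?_
    rw [Real.rpow_def_of_pos (mod_cast (β i).den_pos), Real.exp_le_exp, le_div_iff₀ hr₀]
    nlinarith [mul_le_mul_of_nonneg_left (hle i) hτ.le]
  · have hgap' : 2 * Real.log (β j).den ≤ σ * Real.log (β i).den := by
      have := hgap i j hij
      rwa [div_mul_eq_mul_div, div_le_iff₀ hσ, mul_comm _ σ] at this
    refine le_of_mul_le_mul_right ?_ (hu j)
    nlinarith [mul_le_mul_of_nonneg_left hgap' (r i).cast_nonneg (α := ℝ),
      mul_le_mul_of_nonneg_left (hle₂ i) hσ.le, mul_le_mul_of_nonneg_left (hle j) hσ.le]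
  · have hterm (i : Fin m) : m * (c * r i) ≤ σ * R := by
      have hL := (le_max_right _ _).trans (hβ i).2
      rw [div_le_iff₀ hσ] at hL
      nlinarith [mul_le_mul_of_nonneg_left hL (r i).cast_nonneg (α := ℝ),
        mul_le_mul_of_nonneg_left (hle₂ i) hσ.le]
    rcases m.eq_zero_or_pos with rfl | hm
    · simpa using (mul_pos hσ hR).le
    · have hm' : (0 : ℝ) < m := mod_cast hm
      refine le_of_mul_le_mul_left ?_ hm'
      push_cast
      rw [Finset.mul_sum, Finset.mul_sum]
      exact (Finset.sum_le_sum fun i _ ↦ hterm i).trans_eq (by simp)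

namespace RothApproximation

variable {m : ℕ} {α τ σ ν c R : ℝ} {r : Fin m → ℕ} {β : Fin m → ℚ}

lemma rothHypotheses (h : RothApproximation α τ σ ν c R r β) (hσ : 0 ≤ σ) (hc : 1 ≤ c)
    {P : MvPolynomial (Fin m) ℤ} (hP : P ≠ 0) (hdeg : ∀ i, degreeOf i P ≤ r i)
    (hlen : length P ≤ Real.exp c ^ ∑ i, r i) : RothHypotheses σ (σ * R) r β P where
  ne_zero := hP
  pos := h.pos
  degreeOf_le := hdeg
  le_mul := h.le_mul
  sum_le := (le_mul_of_one_le_left (Nat.cast_nonneg _) hc).trans h.mul_sum_le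
  log_length_le := by
    rw [← Real.exp_nat_mul, mul_comm] at hlen
    rw [Real.log_le_iff_le_exp (one_pos.trans_le (one_le_length hP))]
    exact hlen.trans (Real.exp_le_exp.mpr h.mul_sum_le)
  le_mul_log_den i := mul_le_mul_of_nonneg_left (h.le_mul_log_den i) hσ

lemma mul_le_of_indexGE (h : RothApproximation α τ σ ν c R r β) (hR : 0 < R) (hτ : 0 ≤ τ)
    {Q : MvPolynomial (Fin m) ℤ} (hdeg : ∀ i, degreeOf i Q ≤ r i) (hQ : aeval β Q ≠ 0)
    {A t : ℝ} (hA : 1 ≤ A) (hα : |α| ≤ A)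
    (hlen : (4 * A) ^ (∑ i, r i) * length Q ≤ Real.exp c ^ ∑ i, r i)
    (ht : IndexGE (fun i ↦ (r i : ℝ)⁻¹) (fun _ ↦ α) t Q) :
    τ * t ≤ σ + m * (1 + ν) := by
  have hcast : aeval (fun i ↦ (β i : ℝ)) Q = (aeval β Q : ℚ) := by
    exact aeval_algebraMap_apply ℝ β Q
  have hlower : 1 ≤ |aeval (fun i ↦ (β i : ℝ)) Q| * ∏ i, ((β i).den : ℝ) ^ r i := by
    rw [hcast]
    exact_mod_cast one_le_abs_aeval_mul_prod_den_pow hdeg hQ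
  have hupper := abs_aeval_le_of_indexGE hdeg hA (fun _ ↦ hα) (mul_nonneg hτ hR.le) h.abs_sub_le ht
  have hden : ∏ i, ((β i).den : ℝ) ^ r i ≤ Real.exp (m * ((1 + ν) * R)) :=
    calc ∏ i, ((β i).den : ℝ) ^ r i = ∏ i, Real.exp (r i * Real.log (β i).den) :=
          Finset.prod_congr rfl fun i _ ↦ by
            rw [Real.exp_nat_mul, Real.exp_log (mod_cast (β i).den_pos)]
      _ ≤ ∏ _i : Fin m, Real.exp ((1 + ν) * R) :=
          Finset.prod_le_prod (fun _ _ ↦ (Real.exp_pos _).le)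
            fun i _ ↦ Real.exp_le_exp.mpr (h.mul_log_den_le i)
      _ = _ := by rw [Finset.prod_const, Real.exp_nat_mul, Finset.card_univ, Fintype.card_fin]
  have hconst : (4 * A) ^ (∑ i, r i) * length Q ≤ Real.exp (σ * R) := by
    refine hlen.trans ?_
    rw [← Real.exp_nat_mul, mul_comm]
    exact Real.exp_le_exp.mpr h.mul_sum_le
  have hexp : 1 ≤ Real.exp (R * (σ + m * (1 + ν) - τ * t)) :=
    calc 1 ≤ Real.exp (σ * R) * Real.exp (-(τ * R * t)) * Real.exp (m * ((1 + ν) * R)) := by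
          refine hlower.trans (mul_le_mul (hupper.trans ?_) hden (by positivity) (by positivity))
          gcongr
      _ = _ := by
          rw [← Real.exp_add, ← Real.exp_add]
          ring_nf
  rw [Real.one_le_exp_iff] at hexp
  linarith [nonneg_of_mul_nonneg_right hexp hR]

end RothApproximation

end Approximation

section RothTheorem

lemma exists_nat_pos_mul_exp_neg_le (s : ℝ) {x : ℝ} (hx : 0 < x) :
    ∃ m : ℕ, 0 < m ∧ s * Real.exp (-2 * x ^ 2 * m) ≤ 1 / 2 := by
  have hlim : Filter.Tendsto (fun m : ℕ ↦ s * Real.exp (-2 * x ^ 2 * m)) Filter.atTop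
      (nhds (s * 0)) := by
    refine (Real.tendsto_exp_atBot.comp ?_).const_mul s
    exact tendsto_natCast_atTop_atTop.const_mul_atTop_of_neg (by nlinarith [pow_pos hx 2])
  rw [mul_zero] at hlim
  exact ((Filter.eventually_gt_atTop 0).and
    (hlim.eventually_le_const one_half_pos)).exists

lemma mul_half_sub_le_of_liouvilleWith {α p τ ε : ℝ} (hα : IsIntegral ℤ α)
    (h : LiouvilleWith p α) (hp : 1 < p) (hτ : 0 < τ) (hτp : τ < p) (hε : 0 < ε) (hε₁ : ε ≤ 1) :
    τ * (1 / 2 - 2 * ε) ≤ 1 + 2 * ε := by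
  obtain ⟨s, B, hB, haux⟩ := exists_indexGE_const hα
  obtain ⟨m, hm, hsm⟩ := exists_nat_pos_mul_exp_neg_le s hε
  obtain ⟨σ, hσ, hroth⟩ := roth_lemma m hε
  set A := max 1 |α|
  have hA : 1 ≤ A := le_max_left _ _
  have hB₀ : 0 ≤ B := by linarith
  have hC : 0 < 64 * (B * A) := by positivity
  have hc : 1 ≤ Real.log (64 * (B * A)) := by
    rw [Real.le_log_iff_exp_le hC]
    linarith [Real.exp_one_lt_d9, one_le_mul_of_one_le_of_one_le hB hA]
  obtain ⟨R, hR, r, β, hβ⟩ := exists_rothApproximation h hp hτ hτp (lt_min hσ hε) hε hε₁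
    (Real.log (64 * (B * A))) m
  obtain ⟨P, hP, hdeg, hlen, hindex⟩ := haux m _ hε.le hsm r hβ.pos
  have hPlen : length P ≤ Real.exp (Real.log (64 * (B * A))) ^ ∑ i, r i := by
    rw [Real.exp_log hC]
    refine hlen.trans (pow_le_pow_left₀ (by positivity) ?_ _)
    gcongr
    · norm_num
    · exact le_mul_of_one_le_right hB₀ hA
  obtain ⟨J, hJ, hJβ⟩ := hroth _ r β P <|
    (hβ.rothHypotheses (lt_min hσ hε).le hc hP hdeg hPlen).mono (min_le_left _ _)
  have hJlen : (4 * A) ^ (∑ i, r i) * length (hasseDeriv J P) ≤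
      Real.exp (Real.log (64 * (B * A))) ^ ∑ i, r i :=
    calc (4 * A) ^ (∑ i, r i) * length (hasseDeriv J P)
        ≤ (4 * A) ^ (∑ i, r i) * (2 ^ (∑ i, r i) * (8 * B) ^ ∑ i, r i) := by
          gcongr
          exact (length_hasseDeriv_le hdeg J).trans (by gcongr)
      _ = _ := by
          rw [← mul_pow, ← mul_pow, Real.exp_log hC]
          ring_nf
  have hle := hβ.mul_le_of_indexGE hR hτ.le
    (fun i ↦ (degreeOf_hasseDeriv_le i J P).trans (hdeg i)) hJβ hA (le_max_right _ _) hJlen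
    ((hindex.hasseDeriv J).mono (sub_le_sub_left hJ _))
  have hm' : (1 : ℝ) ≤ m := mod_cast hm
  refine le_of_mul_le_mul_left ?_ (one_pos.trans_le hm')
  nlinarith [min_le_right σ ε, le_mul_of_one_le_left hε.le hm',
    le_mul_of_one_le_left (mul_pos hτ hε).le hm']

theorem not_liouvilleWith_of_isIntegral {α p : ℝ} (hα : IsIntegral ℤ α) (hp : 2 < p) :
    ¬ LiouvilleWith p α := by
  intro h
  obtain ⟨τ, hτ, hτp⟩ := exists_between hp
  obtain ⟨ε, hε, hετ⟩ : ∃ ε > 0, 8 * (1 + τ) * ε = τ - 2 :=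
    ⟨(τ - 2) / (8 * (1 + τ)), div_pos (by linarith) (by linarith),
      mul_div_cancel₀ _ (by linarith)⟩
  nlinarith [mul_half_sub_le_of_liouvilleWith hα h (by linarith) (by linarith) hτp hε
    (by nlinarith)]

theorem not_liouvilleWith_of_isAlgebraic {α p : ℝ} (hα : IsAlgebraic ℤ α) (hp : 2 < p) :
    ¬ LiouvilleWith p α := by
  obtain ⟨n, hn, hint⟩ := hα.exists_integral_multiple
  rw [zsmul_eq_mul] at hint
  exact fun h ↦ not_liouvilleWith_of_isIntegral hint hp (h.int_mul hn)

end RothTheorem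

section ResultingEquation

lemma exists_pos_mul_rpow_neg_le_abs_sub {α τ : ℝ} (hα : IsAlgebraic ℤ α) (hτ : 2 < τ) :
    ∃ c > 0, ∀ (p : ℤ) (q : ℕ), 0 < q → α ≠ p / q → c * (q : ℝ) ^ (-τ) ≤ |α - p / q| := by
  have h := not_liouvilleWith_of_isAlgebraic hα hτ
  simp only [LiouvilleWith, not_exists, Filter.not_frequently, not_and, not_lt] at h
  obtain ⟨N, hN⟩ := Filter.eventually_atTop.mp (h 1)
  refine ⟨((N + 1 : ℕ) : ℝ) ^ (-τ), Real.rpow_pos_of_pos (mod_cast N.succ_pos) _,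
    fun p q hq hne ↦ ?_⟩
  -- Expanding `p / q` by `N + 1` brings the denominator into the range of the asymptotic bound.
  have hexpand : ((p * (N + 1 : ℕ) : ℤ) : ℝ) / (q * (N + 1) : ℕ) = p / q := by
    push_cast
    exact mul_div_mul_right _ _ (by positivity)
  have hbound := hN (q * (N + 1)) (by nlinarith) (p * (N + 1 : ℕ)) (by rwa [hexpand])
  rwa [hexpand, one_div, ← Real.rpow_neg (Nat.cast_nonneg _), mul_comm, Nat.cast_mul,
    Real.mul_rpow (Nat.cast_nonneg _) (Nat.cast_nonneg _)] at hbound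

lemma exists_pos_mul_rpow_neg_le_abs_mul_sub_mul {α δ : ℝ} (hα : IsAlgebraic ℤ α) (hδ : 0 < δ) :
    ∃ c > 0, ∀ p q : ℕ, 0 < q → α * q ≠ p → c * (q : ℝ) ^ (-δ) ≤ |α * q - p| * q := by
  obtain ⟨c, hc, hroth⟩ := exists_pos_mul_rpow_neg_le_abs_sub hα (τ := 2 + δ) (by linarith)
  refine ⟨c, hc, fun p q hq hne ↦ ?_⟩
  have hq₀ : (0 : ℝ) < q := mod_cast hq
  calc c * (q : ℝ) ^ (-δ) = c * (q : ℝ) ^ (-(2 + δ)) * q ^ 2 := by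
        rw [mul_assoc, ← Real.rpow_natCast, ← Real.rpow_add hq₀]
        norm_num
    _ ≤ |α - (p : ℤ) / q| * q ^ 2 := by
        gcongr
        exact hroth p q hq fun h ↦ hne (by rw [h, Int.cast_natCast, div_mul_cancel₀ _ hq₀.ne'])
    _ = |α * q - p| * q := by
        rw [Int.cast_natCast, sq, ← mul_assoc, ← abs_of_pos hq₀, ← abs_mul, abs_of_pos hq₀,
          sub_mul, div_mul_cancel₀ _ hq₀.ne']

lemma exists_pos_mul_max_rpow_le {α δ : ℝ} (hα : IsAlgebraic ℤ α) (hα₀ : 0 < α) (hδ : 0 < δ) :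
    ∃ c > 0, ∀ p q : ℕ, 0 < p → 0 < q → α * q ≠ p →
      c * max (α * q) p ^ (1 - δ) ≤ |α * q - p| * p * q := by
  obtain ⟨c, hc, hlower⟩ := exists_pos_mul_rpow_neg_le_abs_mul_sub_mul hα hδ
  refine ⟨min 1 (c * α ^ δ) / 2, by positivity, fun p q hp hq hne ↦ ?_⟩
  have hp₁ : (1 : ℝ) ≤ p := mod_cast hp
  have hq₁ : (1 : ℝ) ≤ q := mod_cast hq
  set M := max (α * q) p
  have hM : 1 ≤ M := hp₁.trans (le_max_right _ _)
  have hM₀ : 0 < M := one_pos.trans_le hM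
  rcases le_or_gt (M / 2) |α * q - p| with hfar | hnear
  · calc min 1 (c * α ^ δ) / 2 * M ^ (1 - δ) ≤ 1 / 2 * M ^ (1 : ℝ) := by
          gcongr
          · exact min_le_left _ _
          · linarith
      _ = M / 2 := by rw [Real.rpow_one]; ring
      _ ≤ |α * q - p| * p * q := by
          rw [mul_assoc]
          exact hfar.trans <| le_mul_of_one_le_right (abs_nonneg _) <|
            one_le_mul_of_one_le_of_one_le hp₁ hq₁
  · have hpM : M / 2 ≤ p := by
      rcases max_choice (α * q) (p : ℝ) with h | h
      · linarith [le_abs_self (α * q - p)]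
      · linarith
    have hqM : (q : ℝ) ≤ M / α := (le_div_iff₀' hα₀).mpr (le_max_left _ _)
    calc min 1 (c * α ^ δ) / 2 * M ^ (1 - δ) ≤ c * α ^ δ / 2 * M ^ (1 - δ) := by
          gcongr
          exact min_le_right _ _
      _ = c * (M / α) ^ (-δ) * (M / 2) := by
          rw [sub_eq_neg_add, Real.rpow_add hM₀, Real.rpow_one, Real.div_rpow hM₀.le hα₀.le,
            Real.rpow_neg hα₀.le, div_inv_eq_mul]
          ring
      _ ≤ c * (q : ℝ) ^ (-δ) * p := by
          gcongr ?_ * ?_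
          gcongr c * ?_
          exact Real.rpow_le_rpow_of_nonpos (by positivity) hqM (by linarith)
      _ ≤ |α * q - p| * q * p := by
          gcongr ?_ * _
          exact hlower p q hq hne
      _ = |α * q - p| * p * q := by ring

lemma abs_sub_mul_max_pow_le {a b : ℝ} (ha : 0 ≤ a) (hb : 0 ≤ b) (n : ℕ) :
    |a - b| * max a b ^ n ≤ |a ^ (n + 1) - b ^ (n + 1)| := by
  wlog hab : b ≤ a generalizing a b
  · rw [abs_sub_comm, max_comm, abs_sub_comm (a ^ _)]
    exact this hb ha (le_of_not_ge hab)
  rw [max_eq_left hab, abs_of_nonneg (sub_nonneg.mpr hab),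
    abs_of_nonneg (sub_nonneg.mpr (pow_le_pow_left₀ hb hab _))]
  nlinarith [mul_le_mul_of_nonneg_left (pow_le_pow_left₀ hb hab n) hb, pow_succ a n, pow_succ b n]

lemma exists_pos_mul_max_rpow_le_abs_pow_sub_pow {α δ : ℝ} (hα : IsAlgebraic ℤ α) (hα₀ : 0 < α)
    (hδ : 0 < δ) (n : ℕ) :
    ∃ c > 0, ∀ p q : ℕ, 0 < p → 0 < q → α * q ≠ p →
      c * max (α * q) p ^ ((n + 1 : ℕ) - δ) ≤ |(α * q) ^ (n + 1) - p ^ (n + 1)| * p * q := by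
  obtain ⟨c, hc, h⟩ := exists_pos_mul_max_rpow_le hα hα₀ hδ
  refine ⟨c, hc, fun p q hp hq hne ↦ ?_⟩
  set M := max (α * q) p
  have hM : 0 < M := lt_max_of_lt_right (mod_cast hp)
  calc c * M ^ ((n + 1 : ℕ) - δ) = M ^ n * (c * M ^ (1 - δ)) := by
        rw [Nat.cast_add_one, add_sub_assoc, Real.rpow_add hM, Real.rpow_natCast, mul_left_comm]
    _ ≤ M ^ n * (|α * q - p| * p * q) := by
        gcongr ?_ * ?_
        exact h p q hp hq hne
    _ = |α * q - p| * M ^ n * p * q := by ring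
    _ ≤ |(α * q) ^ (n + 1) - p ^ (n + 1)| * p * q := by
        gcongr
        exact abs_sub_mul_max_pow_le (by positivity) (by positivity) n

theorem exists_max_pow_lt_mul_rpow {α ε : ℝ} (hα : IsAlgebraic ℤ α) (hα₀ : 0 < α) (hε : 0 < ε)
    (n : ℕ) :
    ∃ K > 0, ∀ p q : ℕ, 0 < p → 0 < q → α * q ≠ p →
      max (α * q) p ^ (n + 1) < K * (|(α * q) ^ (n + 1) - p ^ (n + 1)| * p * q) ^ (1 + ε) := by
  -- This loss `δ` in the exponent is chosen such that `((n + 1) - δ) * (1 + ε) = n + 1`.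
  set δ := (n + 1 : ℕ) * ε / (1 + ε)
  have hδ : ((n + 1 : ℕ) - δ) * (1 + ε) = (n + 1 : ℕ) := by
    rw [sub_mul, div_mul_cancel₀ _ (by positivity)]
    ring
  obtain ⟨c, hc, h⟩ := exists_pos_mul_max_rpow_le_abs_pow_sub_pow hα hα₀
    (show 0 < δ by positivity) n
  refine ⟨2 * c⁻¹ ^ (1 + ε), by positivity, fun p q hp hq hne ↦ ?_⟩
  set M := max (α * q) p
  set D := |(α * q) ^ (n + 1) - p ^ (n + 1)| * p * q
  have hM : 0 < M := lt_max_of_lt_right (mod_cast hp)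
  have hD : c * M ^ ((n + 1 : ℕ) - δ) ≤ D := h p q hp hq hne
  have hD₀ : 0 < D := (mul_pos hc (Real.rpow_pos_of_pos hM _)).trans_le hD
  calc M ^ (n + 1) = (M ^ ((n + 1 : ℕ) - δ)) ^ (1 + ε) := by
        rw [← Real.rpow_mul hM.le, hδ, Real.rpow_natCast]
    _ ≤ (c⁻¹ * D) ^ (1 + ε) := by
        gcongr
        rwa [le_inv_mul_iff₀ hc]
    _ = c⁻¹ ^ (1 + ε) * D ^ (1 + ε) := Real.mul_rpow (by positivity) hD₀.le
    _ < 2 * c⁻¹ ^ (1 + ε) * D ^ (1 + ε) := by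
        gcongr
        exact lt_two_mul_self (by positivity)

end ResultingEquation

end Roth

theorem wneabc_for_roots_general {s k : ℕ} (hs : s ≠ 0) (hk : k ≠ 0) {ε : ℝ} (hε : 0 < ε) :
    ∃ K > (0 : ℝ), ∀ p q : ℕ, 0 < p → 0 < q →
      ∀ d : ℤ, d = (k : ℤ) * (q : ℤ) ^ s - (p : ℤ) ^ s → d ≠ 0 →
      max ((p : ℝ) ^ s) ((k : ℝ) * (q : ℝ) ^ s) <
        K * (|(d : ℝ)| * (p : ℝ) * (q : ℝ) * (k : ℝ)) ^ ((1 : ℝ) + ε) := by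
  obtain ⟨n, rfl⟩ := Nat.exists_eq_succ_of_ne_zero hs
  have hk₁ : (1 : ℝ) ≤ k := mod_cast Nat.one_le_iff_ne_zero.mpr hk
  set α := (k : ℝ) ^ ((n + 1 : ℕ) : ℝ)⁻¹
  have hα : α ^ (n + 1) = k := Real.rpow_inv_natCast_pow k.cast_nonneg hs
  have hint : IsIntegral ℤ α := .of_pow n.succ_pos (hα ▸ isIntegral_natCast k)
  obtain ⟨K, hK, h⟩ := Roth.exists_max_pow_lt_mul_rpow hint.isAlgebraic
    (by positivity) hε n
  refine ⟨K, hK, fun p q hp hq d hd hd₀ ↦ ?_⟩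
  have hdα : (d : ℝ) = (α * q) ^ (n + 1) - p ^ (n + 1) := by
    rw [mul_pow, hα, hd]
    push_cast
    rfl
  have hne : α * q ≠ p := fun h ↦ hd₀ (by rwa [h, sub_self, Int.cast_eq_zero] at hdα)
  have hmax : max ((p : ℝ) ^ (n + 1)) (k * (q : ℝ) ^ (n + 1)) = max (α * q) p ^ (n + 1) := by
    rw [← hα, ← mul_pow, max_comm]
    exact (pow_left_monotoneOn.map_max (Set.mem_Ici.mpr (by positivity))
      (Set.mem_Ici.mpr p.cast_nonneg)).symm
  calc _ < K * (|(d : ℝ)| * p * q) ^ (1 + ε) := by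
        rw [hmax, hdα]
        exact h p q hp hq hne
    _ ≤ K * (|(d : ℝ)| * p * q * k) ^ (1 + ε) := by
        gcongr ?_ * ?_ ^ _
        exact le_mul_of_one_le_right (by positivity) hk₁

/-- Main theorem (WNEABC for roots): for fixed s ≥ 2 and k ≥ 2 not a perfect s-th
power, and every ε > 0, there is K_ε > 0 such that every convergent p/q of k^{1/s}
with d = k·qˢ − pˢ ≠ 0 satisfies max(pˢ, k·qˢ) < K_ε·(|d|·p·q·k)^{1+ε}. -/
theorem wneabc_for_roots (s k : ℕ) (hs : 2 ≤ s) (hk : 2 ≤ k)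
    (hknp : ¬ ∃ m : ℕ, m ^ s = k) :
    ∀ ε > (0 : ℝ), ∃ K > (0 : ℝ), ∀ p q : ℕ, 0 < p → 0 < q → Nat.Coprime p q →
      |(k : ℝ) ^ ((s : ℝ)⁻¹) - (p : ℝ) / (q : ℝ)| < 1 / (q : ℝ) ^ 2 →
      ∀ d : ℤ, d = (k : ℤ) * (q : ℤ) ^ s - (p : ℤ) ^ s → d ≠ 0 →
      max ((p : ℝ) ^ s) ((k : ℝ) * (q : ℝ) ^ s) <
        K * (|(d : ℝ)| * (p : ℝ) * (q : ℝ) * (k : ℝ)) ^ ((1 : ℝ) + ε) := by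
  intro ε hε
  obtain ⟨K, hK, h⟩ := wneabc_for_roots_general (by omega : s ≠ 0) (by omega : k ≠ 0) hε
  exact ⟨K, hK, fun p q hp hq _ _ ↦ h p q hp hq⟩
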